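/- arXiv:1808.03615 — 2 statements merged into one kernel-verified Lean document; each statement's English description precedes it below -/
import Mathlib

section
/- If V is a partial Steiner triple system, then there is an integer N' such that for every integer u with u ≥ N' and u ≡ 1 or 3 (mod 6), there exists a Steiner triple system U on u points having V as a subsystem (a partial Steiner triple system whose points are among those of U and whose triples are precisely the triples of U contained in it) which is invariant under Aut U, such that the restriction map from Aut U to Aut V is a group isomorphism (Aut U induces the full group Aut V and Aut U ≅ Aut V). -/
open Finset

noncomputable section
open scoped Classical

/-- `T` is the set of triples of a Steiner triple system on the finite type `α`:
every pair of distinct points lies in exactly one triple. -/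
def IsSTS {α : Type*} (T : Finset (Finset α)) : Prop :=
  (∀ t ∈ T, t.card = 3) ∧
    ∀ p q : α, p ≠ q → ∃! t : Finset α, t ∈ T ∧ p ∈ t ∧ q ∈ t

/-- `T` is the set of triples of a partial Steiner triple system on `α`:
every pair of distinct points lies in at most one triple. -/
def IsPSTS {α : Type*} (T : Finset (Finset α)) : Prop :=
  (∀ t ∈ T, t.card = 3) ∧
    ∀ p q : α, p ≠ q → ∀ t₁ ∈ T, ∀ t₂ ∈ T, p ∈ t₁ → q ∈ t₁ → p ∈ t₂ → q ∈ t₂ → t₁ = t₂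

/-- `W` is a (closed) subsystem of the triple system `T`. -/
def IsSub {α : Type*} (T : Finset (Finset α)) (W : Finset α) : Prop :=
  ∀ t ∈ T, 2 ≤ (t ∩ W).card → t ⊆ W

/-- `g` is an automorphism of the triple system `T`. -/
def IsAut {α : Type*} (T : Finset (Finset α)) (g : Equiv.Perm α) : Prop :=
  ∀ t : Finset α, t ∈ T ↔ t.image g ∈ T

/-- The automorphism group of a triple system, as a subgroup of the permutation group. -/
def autGroup {α : Type*} (T : Finset (Finset α)) : Subgroup (Equiv.Perm α) where
  carrier := {g : Equiv.Perm α | IsAut T g}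
  one_mem' := by
    intro t
    simp
  mul_mem' := by
    intro a b ha hb t
    have h1 := hb t
    have h2 := ha (t.image b)
    have key : t.image ⇑(a * b) = (t.image ⇑b).image ⇑a := by
      rw [Equiv.Perm.coe_mul, Finset.image_image]
    rw [key, ← h2]
    exact h1
  inv_mem' := by
    intro a ha t
    have h := ha (t.image ⇑a⁻¹)
    have key : (t.image ⇑a⁻¹).image ⇑a = t := by
      rw [Finset.image_image]
      have hc : (⇑a ∘ ⇑a⁻¹) = id := by
        funext x
        simp
      rw [hc, Finset.image_id]
    rw [key] at h
    exact h.symm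

/-- `φ` embeds the triple system `S` onto a subsystem of `T`: it is injective, maps
triples of `S` to triples of `T`, and the triples of `T` inside the image of `φ` are
precisely the images of the triples of `S`. -/
def IsCopy {α β : Type*} [Fintype α] (S : Finset (Finset α)) (T : Finset (Finset β))
    (φ : α → β) : Prop :=
  Function.Injective φ ∧ (∀ s ∈ S, s.image φ ∈ T) ∧
    ∀ t ∈ T, t ⊆ Finset.univ.image φ → ∃ s ∈ S, t = s.image φ

/-- The point set `W` is invariant under every automorphism of `T`. -/
def AutInvariant {β : Type*} (T : Finset (Finset β)) (W : Finset β) : Prop :=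
  ∀ g : Equiv.Perm β, IsAut T g → W.image g = W

/-- For the copy of `S` inside `T` given by `φ`, restriction gives a group isomorphism
from `Aut T` onto `Aut S`: every automorphism of `T` induces (via `φ`) an automorphism
of `S`, and every automorphism of `S` is induced by exactly one automorphism of `T`. -/
def AutRestrictIso {α β : Type*} (T : Finset (Finset β)) (S : Finset (Finset α))
    (φ : α → β) : Prop :=
  (∀ g : Equiv.Perm β, IsAut T g →
      ∃ h : Equiv.Perm α, IsAut S h ∧ ∀ x : α, g (φ x) = φ (h x)) ∧
    ∀ h : Equiv.Perm α, IsAut S h →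
      ∃! g : Equiv.Perm β, IsAut T g ∧ ∀ x : α, g (φ x) = φ (h x)

/-- `φ` embeds `S` as an `Aut T`-invariant subsystem of `T` on which `Aut T` induces
the full automorphism group of `S`, with `Aut T ≅ Aut S` via restriction. -/
def FullEmbedding {α β : Type*} [Fintype α] (S : Finset (Finset α)) (T : Finset (Finset β))
    (φ : α → β) : Prop :=
  IsCopy S T φ ∧ AutInvariant T (Finset.univ.image φ) ∧ AutRestrictIso T S φ

/-- The points of the projective space `PG(n,2)`: nonzero vectors of `GF(2)^{n+1}`. -/
abbrev PGPoint (n : ℕ) := {x : Fin (n + 1) → ZMod 2 // x ≠ 0}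

/-- The lines of `PG(n,2)`: 3-sets of nonzero vectors summing to `0`. -/
def PGTriples (n : ℕ) : Finset (Finset (PGPoint n)) :=
  Finset.univ.filter fun t : Finset (PGPoint n) =>
    t.card = 3 ∧ ∑ v ∈ t, (v : Fin (n + 1) → ZMod 2) = 0

/-- The smallest subsystem of `T` containing the point set `P`. -/
def GeneratedSub {α : Type*} [Fintype α] (T : Finset (Finset α)) (P : Finset α) : Finset α :=
  Finset.univ.filter fun x => ∀ W : Finset α, IsSub T W → P ⊆ W → x ∈ W

/-- `W` is a subsystem of `T` isomorphic to `PG(n,2)`. -/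
def IsPGSub {α : Type*} [Fintype α] (n : ℕ) (T : Finset (Finset α)) (W : Finset α) : Prop :=
  ∃ φ : PGPoint n → α, IsCopy (PGTriples n) T φ ∧ Finset.univ.image φ = W

/-- A triple system is `PG(2,2)`-paired if any two distinct points lie in at least two
subsystems isomorphic to `PG(2,2)`. -/
def PG22Paired {α : Type*} [Fintype α] (T : Finset (Finset α)) : Prop :=
  ∀ p q : α, p ≠ q → ∃ W₁ W₂ : Finset α, W₁ ≠ W₂ ∧
    (p ∈ W₁ ∧ q ∈ W₁ ∧ IsPGSub 2 T W₁) ∧ p ∈ W₂ ∧ q ∈ W₂ ∧ IsPGSub 2 T W₂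

/-- `T` is `PG(3,2)`-2-pointed with respect to the points `p, q`: any four points
including `p` and `q` generate a subsystem isomorphic to `PG(2,2)` or `PG(3,2)`. -/
def PG32TwoPointed {α : Type*} [Fintype α] (T : Finset (Finset α)) (p q : α) : Prop :=
  p ≠ q ∧ ∀ s : Finset α, s.card = 4 → p ∈ s → q ∈ s →
    IsPGSub 2 T (GeneratedSub T s) ∨ IsPGSub 3 T (GeneratedSub T s)

/-- The copy of `Y` inside `2Y+1`. -/
def dp0 {γ : Type*} (a : γ) : γ ⊕ γ ⊕ Unit := Sum.inl a

/-- The disjoint copy `Y₁` of `Y` inside `2Y+1`. -/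
def dp1 {γ : Type*} (a : γ) : γ ⊕ γ ⊕ Unit := Sum.inr (Sum.inl a)

/-- The extra point `*` of `2Y+1`. -/
def dpStar {γ : Type*} : γ ⊕ γ ⊕ Unit := Sum.inr (Sum.inr ())

/-- The triples of the Steiner triple system `2Y+1` built from a system `Y` with
triple set `T`. -/
def DoubleTriples {γ : Type*} [Fintype γ] (T : Finset (Finset γ)) :
    Finset (Finset (γ ⊕ γ ⊕ Unit)) :=
  Finset.univ.filter fun t : Finset (γ ⊕ γ ⊕ Unit) =>
    (∃ s ∈ T, t = s.image dp0) ∨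
    (∃ a : γ, t = {dpStar, dp0 a, dp1 a}) ∨
    (∃ a b c : γ, ({a, b, c} : Finset γ) ∈ T ∧ t = {dp1 a, dp1 b, dp0 c})

/-- The triples of the direct product of two triple systems. -/
def ProdTriples {α β : Type*} [Fintype α] [Fintype β]
    (TA : Finset (Finset α)) (TB : Finset (Finset β)) : Finset (Finset (α × β)) :=
  Finset.univ.filter fun t : Finset (α × β) =>
    (∃ a : α, ∃ s ∈ TB, t = s.image fun b => (a, b)) ∨
    (∃ b : β, ∃ s ∈ TA, t = s.image fun a => (a, b)) ∨
    (∃ a₁ a₂ a₃ : α, ∃ b₁ b₂ b₃ : β, ({a₁, a₂, a₃} : Finset α) ∈ TA ∧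
      ({b₁, b₂, b₃} : Finset β) ∈ TB ∧ t = {(a₁, b₁), (a₂, b₂), (a₃, b₃)})

/-- The triples of Moore's construction `U = X ∪ (V × A)`.  Here `TX` (on `δ`), `TV`
(on `α`), `TY` (on `γ`) are the triple sets of `X`, `V`, `Y`; `j : δ → γ` embeds `X`
as a subsystem of `Y` and `ℓ : A → γ` labels `Y − X` by the group `A`. -/
def MooreTriples {δ α γ A : Type*} [Fintype δ] [Fintype α] [Fintype A] [Group A]
    (TX : Finset (Finset δ)) (TV : Finset (Finset α)) (TY : Finset (Finset γ))
    (j : δ → γ) (ℓ : A → γ) : Finset (Finset (δ ⊕ α × A)) :=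
  Finset.univ.filter fun t : Finset (δ ⊕ α × A) =>
    (∃ s ∈ TX, t = s.image Sum.inl) ∨
    (∃ v : α, ∃ a₁ a₂ : A, ∃ x : δ, ({ℓ a₁, ℓ a₂, j x} : Finset γ) ∈ TY ∧
      t = {Sum.inr (v, a₁), Sum.inr (v, a₂), Sum.inl x}) ∨
    (∃ v : α, ∃ a₁ a₂ a₃ : A, ({ℓ a₁, ℓ a₂, ℓ a₃} : Finset γ) ∈ TY ∧
      t = {Sum.inr (v, a₁), Sum.inr (v, a₂), Sum.inr (v, a₃)}) ∨
    (∃ v₁ v₂ v₃ : α, ∃ a₁ a₂ a₃ : A, ({v₁, v₂, v₃} : Finset α) ∈ TV ∧ a₁ * a₂ * a₃ = 1 ∧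
      t = {Sum.inr (v₁, a₁), Sum.inr (v₂, a₂), Sum.inr (v₃, a₃)})

/-- The hypotheses of Moore's construction: `Y` and `V` are Steiner triple systems,
`A` is a cyclic group, `j` embeds `X` as a subsystem of `Y` (with triple set `TX`),
and `ℓ` is a bijective labeling of `Y − X` by `A`. -/
def MooreSetup {δ α γ A : Type*} [Fintype δ] [Group A]
    (TX : Finset (Finset δ)) (TV : Finset (Finset α)) (TY : Finset (Finset γ))
    (j : δ → γ) (ℓ : A → γ) : Prop :=
  IsSTS TY ∧ IsSTS TV ∧ IsCyclic A ∧ Function.Injective j ∧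
    IsSub TY (Finset.univ.image j) ∧ IsCopy TX TY j ∧
    Function.Injective ℓ ∧ Set.range ℓ = (Set.range j)ᶜ

/-- The subsystem `Y_v = X ∪ (v × A)` of Moore's construction. -/
def MooreY {δ α A : Type*} [Fintype δ] [Fintype A] (v : α) : Finset (δ ⊕ α × A) :=
  (Finset.univ.image (Sum.inl : δ → δ ⊕ α × A)) ∪
    Finset.univ.image fun a : A => (Sum.inr (v, a) : δ ⊕ α × A)

/-- A subsystem of type (3.1) of Moore's construction, where `ε` denotes the unique
involution `−1` of `A`: the seven points `x, (v_i, a_i), (v_i, −a_i)` for a triple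
`{v₁,v₂,v₃}` of `V`, with `a₁a₂a₃ = 1` and `{a_i, −a_i, x}` a triple of `Y`. -/
def MooreType31 {δ α γ A : Type*} [Group A] (TV : Finset (Finset α))
    (TY : Finset (Finset γ)) (j : δ → γ) (ℓ : A → γ) (ε : A)
    (W : Finset (δ ⊕ α × A)) : Prop :=
  ∃ v₁ v₂ v₃ : α, ∃ a₁ a₂ a₃ : A, ∃ x : δ,
    ({v₁, v₂, v₃} : Finset α) ∈ TV ∧ a₁ * a₂ * a₃ = 1 ∧
    ({ℓ a₁, ℓ (ε * a₁), j x} : Finset γ) ∈ TY ∧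
    ({ℓ a₂, ℓ (ε * a₂), j x} : Finset γ) ∈ TY ∧
    ({ℓ a₃, ℓ (ε * a₃), j x} : Finset γ) ∈ TY ∧
    W = {Sum.inl x, Sum.inr (v₁, a₁), Sum.inr (v₁, ε * a₁), Sum.inr (v₂, a₂),
         Sum.inr (v₂, ε * a₂), Sum.inr (v₃, a₃), Sum.inr (v₃, ε * a₃)}

/-- The point set of a family of triples. -/
def ptsOf {β : Type*} (T : Finset (Finset β)) : Finset β := T.sup id

/-- Adjacency of triples: two distinct triples of `T` meeting in a point. -/
def TriAdj {β : Type*} (T : Finset (Finset β)) (t s : Finset β) : Prop :=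
  t ∈ T ∧ s ∈ T ∧ t ≠ s ∧ (t ∩ s).Nonempty

/-- A partial Steiner triple system is cyclic if the graph whose vertices are its
triples, two joined when they meet, is a cycle (equivalently: it has at least three
triples, every triple meets exactly two others, and the graph is connected). -/
def IsCyclicPSTS {β : Type*} (T : Finset (Finset β)) : Prop :=
  3 ≤ T.card ∧ (∀ t ∈ T, (T.filter fun s => s ≠ t ∧ (s ∩ t).Nonempty).card = 2) ∧
    ∀ t ∈ T, ∀ s ∈ T, Relation.ReflTransGen (TriAdj T) t s

/-- The partial Steiner triple system `Q(z)` (for the parameter `n`), with triple set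
`T`, point set `P` and distinguished point `z`: two cyclic PSTSs `C₁, C₂` on
`2n+4` and `2n+6` points meeting exactly in the point `z`, which lies in two triples
of each, triples `{z, z'_i, z_i}` of `C_i` with `z'_i` in two triples of `C_i`, and a
new point `z'` in the single additional triple `{z'_1, z', z'_2}`. -/
def IsQ {β : Type*} (n : ℕ) (T : Finset (Finset β)) (P : Finset β) (z : β) : Prop :=
  ∃ C₁ C₂ : Finset (Finset β), ∃ z' z₁' z₂' z₁ z₂ : β,
    IsPSTS T ∧ IsCyclicPSTS C₁ ∧ IsCyclicPSTS C₂ ∧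
    (ptsOf C₁).card = 2 * n + 4 ∧ (ptsOf C₂).card = 2 * n + 6 ∧
    ptsOf C₁ ∩ ptsOf C₂ = {z} ∧
    (C₁.filter fun t => z ∈ t).card = 2 ∧ (C₂.filter fun t => z ∈ t).card = 2 ∧
    ({z, z₁', z₁} : Finset β) ∈ C₁ ∧ (C₁.filter fun t => z₁' ∈ t).card = 2 ∧
    ({z, z₂', z₂} : Finset β) ∈ C₂ ∧ (C₂.filter fun t => z₂' ∈ t).card = 2 ∧
    z' ∉ ptsOf C₁ ∪ ptsOf C₂ ∧
    T = C₁ ∪ C₂ ∪ {({z₁', z', z₂'} : Finset β)} ∧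
    P = ptsOf C₁ ∪ ptsOf C₂ ∪ {z'}

/-- Nonempty subsets of `β`: the points of the projective space `P` over `GF(2)`
built on a point set `β`. -/
abbrev NESet (β : Type*) := {s : Finset β // s.Nonempty}

/-- The triples of the projective space over `GF(2)` on the nonempty subsets of `β`:
3-sets of subsets with empty symmetric difference. -/
def sdTriples (β : Type*) [Fintype β] : Finset (Finset (NESet β)) :=
  Finset.univ.filter fun t : Finset (NESet β) =>
    ∃ a b c : NESet β, a ≠ b ∧ a ≠ c ∧ b ≠ c ∧ t = {a, b, c} ∧
      symmDiff (symmDiff a.1 b.1) c.1 = ∅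

/-- The singleton `{a}` as a point of the projective space. -/
def sEl {β : Type*} (a : β) : NESet β := ⟨{a}, Finset.singleton_nonempty a⟩

/-- The pair `{a,b}` as a point of the projective space. -/
def pEl {β : Type*} (a b : β) : NESet β := ⟨{a, b}, Finset.insert_nonempty a {b}⟩

/-- The triples of `P` removed in Cameron's construction, for each triple `{a,b,c}`
of `V'`. -/
def removedTriples {β : Type*} [Fintype β] (TV' : Finset (Finset β)) :
    Finset (Finset (NESet β)) :=
  Finset.univ.filter fun t : Finset (NESet β) =>
    ∃ a b c : β, ({a, b, c} : Finset β) ∈ TV' ∧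
      (t = {pEl a b, pEl a c, pEl b c} ∨ t = {sEl a, sEl b, pEl a b} ∨
       t = {sEl a, sEl c, pEl a c} ∨ t = {sEl b, sEl c, pEl b c})

/-- The new triples of Cameron's construction, for each triple `{a,b,c}` of `V'`. -/
def addedTriples {β : Type*} [Fintype β] (TV' : Finset (Finset β)) :
    Finset (Finset (NESet β)) :=
  Finset.univ.filter fun t : Finset (NESet β) =>
    ∃ a b c : β, ({a, b, c} : Finset β) ∈ TV' ∧
      (t = {sEl a, sEl b, sEl c} ∨ t = {sEl a, pEl a b, pEl a c} ∨
       t = {sEl b, pEl a b, pEl b c} ∨ t = {sEl c, pEl a c, pEl b c})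

/-- The Steiner triple system `U` of Cameron's construction obtained from the
projective space `P` and the partial system `V'`. -/
def CameronSTS {β : Type*} [Fintype β] (TV' : Finset (Finset β)) :
    Finset (Finset (NESet β)) :=
  (sdTriples β \ removedTriples TV') ∪ addedTriples TV'

/-!
Steiner triple systems are handled as Steiner quasigroups. Cameron's modification of the projective
space on the nonempty subsets of `Fin k ⊕ α` contains `V` on singletons and has, by choice of `k`,
a prescribed order modulo `6`. Colour its points so that the colours recognise the points of `V` and
all singletons outside `V`: then the automorphisms preserving the colours are exactly those induced
by `Aut V`.

The colours are encoded by a blow-up. Replace each point `v` by a copy of a cyclic group `A`, add a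
fixed Steiner system `X` acting on every copy by involutions, and twist the product of points over
`v ≠ w` by the colours of the line through `v` and `w`. Counting the solutions of a word equation
shows that every automorphism fixes `X` setwise, hence permutes the copies of `A`; on each of them
it is affine and permutes the involutions. If the involutions are rigid, it is the identity on `A`,
so the automorphism comes from one of the base that preserves the line sums of the colours, which
determine the colours. Rigid involutions arise from the edges of a circulant graph, conjugated by a
permutation of `A` that moves three points only. The sizes of `X` and `A` can be chosen to reach
every large order in the residue class.
-/

/-! ### Steiner quasigroups -/

/-- A Steiner quasigroup: the operation for which `{x, y, m x y}` is the triple through two distinct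
points `x`, `y` of a Steiner triple system. -/
structure IsSteiner {P : Type*} (m : P → P → P) : Prop where
  idem : ∀ x, m x x = x
  comm : ∀ x y, m x y = m y x
  inv : ∀ x y, m x (m x y) = y

/-- Automorphisms of a binary operation. -/
def IsOpAut {P : Type*} (m : P → P → P) (g : Equiv.Perm P) : Prop :=
  ∀ x y, g (m x y) = m (g x) (g y)

/-- The triple system of a Steiner quasigroup. -/
def steinerTriples {P : Type*} [Fintype P] (m : P → P → P) : Finset (Finset P) :=
  univ.filter fun t => ∃ x y, x ≠ y ∧ t = {x, y, m x y}

/-- The operation obtained from `m` by renaming the points along `e`. -/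
def renameOp {P Q : Type*} (e : P ≃ Q) (m : P → P → P) (x y : Q) : Q :=
  e (m (e.symm x) (e.symm y))

section Steiner

variable {P Q : Type*} {m : P → P → P}

theorem mem_steinerTriples [Fintype P] {t : Finset P} :
    t ∈ steinerTriples m ↔ ∃ x y, x ≠ y ∧ t = {x, y, m x y} := by
  simp only [steinerTriples, mem_filter, mem_univ, true_and]

theorem triple_mem_steinerTriples [Fintype P] {x y : P} (h : x ≠ y) :
    {x, y, m x y} ∈ steinerTriples m :=
  mem_steinerTriples.2 ⟨x, y, h, rfl⟩

namespace IsSteiner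

theorem rename (hm : IsSteiner m) (e : P ≃ Q) : IsSteiner (renameOp e m) where
  idem x := by simp only [renameOp, hm.idem, Equiv.apply_symm_apply]
  comm x y := by rw [renameOp, hm.comm, renameOp]
  inv x y := by simp only [renameOp, Equiv.symm_apply_apply, hm.inv, Equiv.apply_symm_apply]

theorem eq_iff (hm : IsSteiner m) {x y z : P} : m x y = z ↔ y = m x z := by
  constructor <;> rintro rfl <;> rw [hm.inv]

theorem right_injective (hm : IsSteiner m) (x : P) : Function.Injective (m x) :=
  Function.LeftInverse.injective (hm.inv x)

theorem ne_left (hm : IsSteiner m) {x y : P} (h : x ≠ y) : m x y ≠ x := fun e =>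
  h (by rw [← hm.inv x y, e, hm.idem])

theorem ne_right (hm : IsSteiner m) {x y : P} (h : x ≠ y) : m x y ≠ y := by
  rw [hm.comm]
  exact hm.ne_left h.symm

theorem eq_of_mem_triple (hm : IsSteiner m) {x y z : P} (hxy : x ≠ y)
    (h : m x y ∈ ({x, y, z} : Finset P)) : m x y = z := by
  simp only [mem_insert, mem_singleton] at h
  exact (h.resolve_left (hm.ne_left hxy)).resolve_left (hm.ne_right hxy)

theorem eq_triple [Fintype P] (hm : IsSteiner m) {t : Finset P} (ht : t ∈ steinerTriples m)
    {p q : P} (hp : p ∈ t) (hq : q ∈ t) (hpq : p ≠ q) : t = {p, q, m p q} := by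
  obtain ⟨x, y, -, rfl⟩ := mem_steinerTriples.1 ht
  have hyx := hm.comm y x
  have hyz : m y (m x y) = x := by rw [hm.comm x y, hm.inv]
  have hzx : m (m x y) x = y := by rw [hm.comm, hm.inv]
  have hzy : m (m x y) y = x := by rw [hm.comm, hyz]
  simp only [mem_insert, mem_singleton] at hp hq
  rcases hp with rfl | rfl | rfl <;> rcases hq with rfl | rfl | rfl <;>
    first
      | exact absurd rfl hpq
      | (ext z; simp only [hm.inv, hyz, hzx, hzy, hyx, mem_insert, mem_singleton] <;> tauto)

theorem isSTS [Fintype P] (hm : IsSteiner m) : IsSTS (steinerTriples m) := by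
  refine ⟨fun t ht => ?_, fun p q hpq => ?_⟩
  · obtain ⟨x, y, hxy, rfl⟩ := mem_steinerTriples.1 ht
    exact card_eq_three.2 ⟨x, y, m x y, hxy, (hm.ne_left hxy).symm, (hm.ne_right hxy).symm, rfl⟩
  · refine ⟨{p, q, m p q}, ⟨triple_mem_steinerTriples hpq, by simp, by simp⟩, ?_⟩
    rintro t ⟨ht, hp, hq⟩
    exact hm.eq_triple ht hp hq hpq

theorem isOpAut_of_isAut [Fintype P] (hm : IsSteiner m) {g : Equiv.Perm P}
    (hg : IsAut (steinerTriples m) g) : IsOpAut m g := by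
  intro x y
  obtain rfl | hxy := eq_or_ne x y
  · rw [hm.idem, hm.idem]
  have himage : ({x, y, m x y} : Finset P).image g = {g x, g y, g (m x y)} := by
    rw [image_insert, image_insert, image_singleton]
  have ht := (hg _).1 (triple_mem_steinerTriples hxy)
  rw [himage] at ht
  refine (hm.eq_of_mem_triple (g.injective.ne hxy) ?_).symm
  rw [hm.eq_triple ht (by simp) (by simp) (g.injective.ne hxy)]
  simp

end IsSteiner

theorem image_isOpAut_mem_steinerTriples [Fintype P] {g : Equiv.Perm P} (hg : IsOpAut m g)
    {t : Finset P} (ht : t ∈ steinerTriples m) : t.image g ∈ steinerTriples m := by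
  obtain ⟨x, y, hxy, rfl⟩ := mem_steinerTriples.1 ht
  rw [image_insert, image_insert, image_singleton, hg x y]
  exact triple_mem_steinerTriples (g.injective.ne hxy)

namespace IsOpAut

variable {g h : Equiv.Perm P}

theorem mul (hg : IsOpAut m g) (hh : IsOpAut m h) : IsOpAut m (g * h) := fun x y => by
  simp only [Equiv.Perm.mul_apply, hh x y, hg _ _]

theorem inv (hg : IsOpAut m g) : IsOpAut m g⁻¹ := fun x y =>
  g.injective (by simp only [hg _ _, Equiv.Perm.inv_def, Equiv.apply_symm_apply])

theorem isAut [Fintype P] (hg : IsOpAut m g) : IsAut (steinerTriples m) g := fun t => by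
  refine ⟨image_isOpAut_mem_steinerTriples hg, fun ht => ?_⟩
  have := image_isOpAut_mem_steinerTriples hg.inv ht
  rwa [image_image, ← Equiv.Perm.coe_mul, inv_mul_cancel, Equiv.Perm.coe_one, image_id] at this

theorem rename (hg : IsOpAut m g) (e : P ≃ Q) : IsOpAut (renameOp e m) (e.permCongr g) :=
  fun x y => by
    simp only [renameOp, Equiv.permCongr_apply, Equiv.symm_apply_apply, hg _ _]

theorem of_rename {e : P ≃ Q} {g : Equiv.Perm Q} (hg : IsOpAut (renameOp e m) g) :
    IsOpAut m (e.symm.permCongr g) := fun x y => by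
  have := hg (e x) (e y)
  simp only [renameOp, Equiv.symm_apply_apply] at this
  simp only [Equiv.permCongr_apply, Equiv.symm_symm, this, Equiv.symm_apply_apply]

end IsOpAut

end Steiner

/-! ### Envelopes -/

/-- `φ` places the partial system `TV` in the Steiner quasigroup `m`, whose points are coloured by
`f`, in such a way that the colour preserving automorphisms of `m` restrict bijectively to the
automorphisms of `TV`. The points of `TV` have colour `0`; the colouring `f = 0` means that all
automorphisms of `m` are considered. -/
structure IsEnvelope {α U : Type*} (TV : Finset (Finset α)) (m : U → U → U) (f : U → ℕ)
    (φ : α → U) : Prop where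
  steiner : IsSteiner m
  inj : Function.Injective φ
  triple : ∀ a b c, a ≠ b → (m (φ a) (φ b) = φ c ↔ {a, b, c} ∈ TV)
  colour : ∀ a, f (φ a) = 0
  lift : ∀ σ, IsAut TV σ → ∃ g, IsOpAut m g ∧ (∀ x, f (g x) = f x) ∧ ∀ a, g (φ a) = φ (σ a)
  restrict : ∀ g, IsOpAut m g → (∀ x, f (g x) = f x) → ∀ a, ∃ b, g (φ a) = φ b
  faithful : ∀ g, IsOpAut m g → (∀ x, f (g x) = f x) → (∀ a, g (φ a) = φ a) → g = 1

namespace IsEnvelope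

variable {α U U' : Type*} {TV : Finset (Finset α)} {m : U → U → U} {f : U → ℕ} {φ : α → U}

theorem rename (h : IsEnvelope TV m f φ) (e : U ≃ U') :
    IsEnvelope TV (renameOp e m) (f ∘ e.symm) (e ∘ φ) where
  steiner := h.steiner.rename e
  inj := e.injective.comp h.inj
  triple a b c hab := by
    simpa only [renameOp, Function.comp_apply, Equiv.symm_apply_apply, e.injective.eq_iff]
      using h.triple a b c hab
  colour a := by simpa only [Function.comp_apply, Equiv.symm_apply_apply] using h.colour a
  lift σ hσ := by
    obtain ⟨g, hg, hgf, hgφ⟩ := h.lift σ hσ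
    refine ⟨e.permCongr g, hg.rename e, fun x => ?_, fun a => ?_⟩
    · simp only [Equiv.permCongr_apply, Function.comp_apply, Equiv.symm_apply_apply, hgf]
    · simp only [Equiv.permCongr_apply, Function.comp_apply, Equiv.symm_apply_apply, hgφ]
  restrict g hg hgf a := by
    obtain ⟨b, hb⟩ := h.restrict _ hg.of_rename
      (fun x => by simpa [Equiv.permCongr_apply] using hgf (e x)) a
    exact ⟨b, by simp [← hb, Equiv.permCongr_apply]⟩
  faithful g hg hgf hgφ := by
    have := h.faithful _ hg.of_rename
      (fun x => by simpa [Equiv.permCongr_apply] using hgf (e x))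
      (fun a => by simpa [Equiv.permCongr_apply, Equiv.symm_apply_eq] using hgφ a)
    ext x
    simpa [Equiv.permCongr_apply, Equiv.symm_apply_eq] using Equiv.congr_fun this (e.symm x)

theorem exists_perm [Finite α] (h : IsEnvelope TV m 0 φ) (hV : IsPSTS TV) {g : Equiv.Perm U}
    (hg : IsOpAut m g) : ∃ σ : Equiv.Perm α, IsAut TV σ ∧ ∀ a, g (φ a) = φ (σ a) := by
  choose σ hσ using h.restrict g hg fun _ => rfl
  have hσi : Function.Injective σ := fun a b e =>
    h.inj (g.injective (by rw [hσ, hσ, e]))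
  have key : ∀ a b c, a ≠ b → ({a, b, c} ∈ TV ↔ {σ a, σ b, σ c} ∈ TV) := by
    intro a b c hab
    rw [← h.triple a b c hab, ← h.triple _ _ _ (hσi.ne hab), ← hσ, ← hσ, ← hσ, ← hg,
      g.injective.eq_iff]
  refine ⟨Equiv.ofBijective σ (Finite.injective_iff_bijective.1 hσi), fun t => ?_, hσ⟩
  by_cases h3 : t.card = 3
  · obtain ⟨a, b, c, hab, -, -, rfl⟩ := card_eq_three.1 h3
    simpa only [image_insert, image_singleton, Equiv.ofBijective_apply] using key a b c hab
  · refine iff_of_false (fun ht => h3 (hV.1 t ht)) (fun ht => h3 ?_)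
    rw [← hV.1 _ ht, card_image_of_injective _ (Equiv.injective _)]

variable [Fintype U]

theorem isCopy [Fintype α] (h : IsEnvelope TV m f φ) (hV : IsPSTS TV) :
    IsCopy TV (steinerTriples m) φ := by
  refine ⟨h.inj, fun s hs => ?_, fun t ht hsub => ?_⟩
  · obtain ⟨a, b, c, hab, -, -, rfl⟩ := card_eq_three.1 (hV.1 s hs)
    rw [image_insert, image_insert, image_singleton, ← (h.triple a b c hab).2 hs]
    exact triple_mem_steinerTriples (h.inj.ne hab)
  · obtain ⟨x, y, z, hxy, -, -, rfl⟩ := card_eq_three.1 (h.steiner.isSTS.1 t ht)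
    have hrange : ∀ w ∈ ({x, y, z} : Finset U), ∃ a, φ a = w := fun w hw => by
      simpa only [mem_image, mem_univ, true_and] using hsub hw
    obtain ⟨a, rfl⟩ := hrange x (by simp)
    obtain ⟨b, rfl⟩ := hrange y (by simp)
    obtain ⟨c, rfl⟩ := hrange z (by simp)
    have hc : m (φ a) (φ b) = φ c := by
      refine h.steiner.eq_of_mem_triple hxy ?_
      rw [h.steiner.eq_triple ht (p := φ a) (q := φ b) (by simp) (by simp) hxy]
      simp
    exact ⟨{a, b, c}, (h.triple a b c (ne_of_apply_ne φ hxy)).1 hc, by simp [image_insert]⟩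

theorem autInvariant [Fintype α] (h : IsEnvelope TV m 0 φ) (hV : IsPSTS TV) :
    AutInvariant (steinerTriples m) (univ.image φ) := by
  intro g hg
  obtain ⟨σ, -, hσ⟩ := h.exists_perm hV (h.steiner.isOpAut_of_isAut hg)
  calc (univ.image φ).image g = univ.image (φ ∘ σ) := by
        rw [image_image]
        exact image_congr fun a _ => hσ a
    _ = univ.image φ := by rw [← image_image, image_univ_of_surjective σ.surjective]

theorem autRestrictIso [Finite α] (h : IsEnvelope TV m 0 φ) (hV : IsPSTS TV) :
    AutRestrictIso (steinerTriples m) TV φ := by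
  refine ⟨fun g hg => h.exists_perm hV (h.steiner.isOpAut_of_isAut hg), fun σ hσ => ?_⟩
  obtain ⟨g, hg, -, hgφ⟩ := h.lift σ hσ
  refine ⟨g, ⟨hg.isAut, hgφ⟩, ?_⟩
  rintro g' ⟨hg', hgφ'⟩
  have hquot : g⁻¹ * g' = 1 :=
    h.faithful _ (hg.inv.mul (h.steiner.isOpAut_of_isAut hg')) (fun _ => rfl) fun a => by
      rw [Equiv.Perm.mul_apply, hgφ', ← hgφ, Equiv.Perm.inv_def, Equiv.symm_apply_apply]
  exact (inv_mul_eq_one.1 hquot).symm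

theorem exists_fin [Fintype α] (h : IsEnvelope TV m 0 φ) (hV : IsPSTS TV) {u : ℕ}
    (hu : Fintype.card U = u) :
    ∃ T : Finset (Finset (Fin u)), IsSTS T ∧ ∃ ψ : α → Fin u, FullEmbedding TV T ψ := by
  have h' : IsEnvelope TV _ 0 _ := h.rename (Fintype.equivFinOfCardEq hu)
  exact ⟨_, h'.steiner.isSTS, _, h'.isCopy hV, h'.autInvariant hV, h'.autRestrictIso hV⟩

end IsEnvelope

/-! ### The Bose construction -/

section Bose

variable {A : Type*} [CommRing A] {h : A}

/-- The Bose operation on `A × ZMod 3`, where `h` is a half of `1` in `A`: its triples are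
`{a} × ZMod 3` and `{(a, i), (b, i), ((a + b) / 2, i + 1)}`. -/
def boseOp (h : A) (p q : A × ZMod 3) : A × ZMod 3 :=
  if p.1 = q.1 then (p.1, -(p.2 + q.2))
  else if p.2 = q.2 then ((p.1 + q.1) * h, p.2 + 1)
  else if q.2 = p.2 + 1 then (2 * q.1 - p.1, p.2)
  else (2 * p.1 - q.1, q.2)

theorem boseOp_comm (p q : A × ZMod 3) : boseOp h p q = boseOp h q p := by
  obtain ⟨a, i⟩ := p
  obtain ⟨b, j⟩ := q
  obtain rfl | hab := eq_or_ne a b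
  · simp only [boseOp, if_true, add_comm]
  obtain rfl | hij := eq_or_ne i j
  · simp only [boseOp, hab, hab.symm, if_true, if_false, add_comm]
  have hcycle : ∀ i j : ZMod 3, i ≠ j → (i = j + 1 ↔ ¬ j = i + 1) := by decide
  simp only [boseOp, hab, hab.symm, hij, hij.symm, if_false, hcycle i j hij, ite_not]

theorem boseOp_inv (hh : h * 2 = 1) (p q : A × ZMod 3) : boseOp h p (boseOp h p q) = q := by
  obtain ⟨a, i⟩ := p
  obtain ⟨b, j⟩ := q
  have hsucc : i ≠ i + 1 := by revert i; decide
  obtain rfl | hab := eq_or_ne a b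
  · simp only [boseOp, if_true, neg_add_rev, neg_neg, add_comm, add_neg_cancel_left]
  obtain rfl | hij := eq_or_ne i j
  · have hmid : a ≠ (a + b) * h := fun e => hab (by linear_combination 2 * e + (a + b) * hh)
    have hrefl : 2 * ((a + b) * h) - a = b := by linear_combination (a + b) * hh
    simp only [boseOp, hab, hmid, hsucc, hrefl, if_true, if_false]
  by_cases hj : j = i + 1
  · subst hj
    have hrefl : a ≠ 2 * b - a := fun e => hab (by linear_combination h * e - (a - b) * hh)
    have hmid : (a + (2 * b - a)) * h = b := by linear_combination b * hh
    simp only [boseOp, hab, hrefl, hsucc, hmid, if_true, if_false]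
  · have hrefl : a ≠ 2 * a - b := fun e => hab (by linear_combination -e)
    simp only [boseOp, hab, hij, hj, hrefl, if_false, sub_sub_cancel]

theorem isSteiner_boseOp (hh : h * 2 = 1) : IsSteiner (boseOp h) where
  idem p := by
    have hneg : ∀ i : ZMod 3, -(i + i) = i := by decide
    simp only [boseOp, if_true, hneg]
  comm := boseOp_comm
  inv := boseOp_inv hh

theorem exists_isSteiner_of_card {X : Type*} [Fintype X] {k : ℕ}
    (hX : Fintype.card X = 3 * (2 * k + 1)) : ∃ m : X → X → X, IsSteiner m := by
  have hh : ((k + 1 : ℕ) : ZMod (2 * k + 1)) * 2 = 1 := by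
    have := ZMod.natCast_self (2 * k + 1)
    push_cast at this ⊢
    linear_combination this
  have hc : Fintype.card (ZMod (2 * k + 1) × ZMod 3) = Fintype.card X := by
    rw [Fintype.card_prod, ZMod.card, ZMod.card, hX, mul_comm]
  exact ⟨_, (isSteiner_boseOp hh).rename (Fintype.equivOfCardEq hc)⟩

end Bose

/-! ### Cameron's modification of a projective space -/

section Cameron

variable {β : Type*} {S : Finset (Finset β)} {s p q : Finset β}

/-- The points `p`, `q` and `p ∆ q` of the plane of subsets of `s` form a line avoiding the
centre `s`. -/
def LineInPlane (s p q : Finset β) : Prop :=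
  (p ⊆ s ∧ q ⊆ s) ∧ (p ≠ ∅ ∧ p ≠ s) ∧ (q ≠ ∅ ∧ q ≠ s) ∧ symmDiff p q ≠ ∅ ∧ symmDiff p q ≠ s

/-- The product of Cameron's system: lines of a plane `s ∈ S` avoiding the centre `s` have one of
their points moved along the line through the centre. The empty set serves as an identity and the
supremum is taken over at most one set. -/
def cameronMul (S : Finset (Finset β)) (p q : Finset β) : Finset β :=
  symmDiff (symmDiff p q) ((S.filter fun s => LineInPlane s p q).sup id)

namespace LineInPlane

theorem symm (h : LineInPlane s p q) : LineInPlane s q p :=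
  ⟨h.1.symm, h.2.2.1, h.2.1, symmDiff_comm p q ▸ h.2.2.2⟩

theorem symmDiff_right (h : LineInPlane s p q) : LineInPlane s p (symmDiff p q) := by
  obtain ⟨⟨hp, hq⟩, hp', hq', hpq⟩ := h
  refine ⟨⟨hp, ?_⟩, hp', hpq, ?_⟩
  · exact symmDiff_le_sup.trans (union_subset hp hq)
  · rwa [symmDiff_symmDiff_cancel_left]

theorem add_centre (h : LineInPlane s p q) : LineInPlane s p (symmDiff q s) := by
  obtain ⟨⟨hp, hq⟩, hp', hq', hpq⟩ := h
  have hcompl : ∀ t : Finset β, t ≠ ∅ ∧ t ≠ s → symmDiff t s ≠ ∅ ∧ symmDiff t s ≠ s := by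
    intro t ht
    rw [← bot_eq_empty, Ne, Ne, symmDiff_eq_bot, symmDiff_eq_right, bot_eq_empty]
    exact ht.symm
  refine ⟨⟨hp, symmDiff_le_sup.trans (union_subset hq subset_rfl)⟩, hp', hcompl q hq', ?_⟩
  rw [← symmDiff_assoc]
  exact hcompl _ hpq

theorem exists_mem_ne (h : LineInPlane s p q) : ∃ x ∈ p, ∃ y ∈ q, x ≠ y := by
  obtain ⟨-, ⟨hp, -⟩, ⟨hq, -⟩, hpq, -⟩ := h
  obtain ⟨x₀, hx₀⟩ := nonempty_iff_ne_empty.2 hp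
  obtain ⟨y₀, hy₀⟩ := nonempty_iff_ne_empty.2 hq
  by_contra! heq
  refine hpq (symmDiff_eq_bot.2 (Finset.ext fun z => ⟨fun hz => ?_, fun hz => ?_⟩))
  · exact heq z hz y₀ hy₀ ▸ hy₀
  · exact heq x₀ hx₀ z hz ▸ hx₀

theorem centre_unique (hS : IsPSTS S) {s' : Finset β} (hs : s ∈ S) (hs' : s' ∈ S)
    (h : LineInPlane s p q) (h' : LineInPlane s' p q) : s = s' := by
  obtain ⟨x, hx, y, hy, hxy⟩ := h.exists_mem_ne
  exact hS.2 x y hxy s hs s' hs' (h.1.1 hx) (h.1.2 hy) (h'.1.1 hx) (h'.1.2 hy)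

end LineInPlane

theorem cameronMul_of_mem (hS : IsPSTS S) (hs : s ∈ S) (h : LineInPlane s p q) :
    cameronMul S p q = symmDiff (symmDiff p q) s := by
  have : (S.filter fun s => LineInPlane s p q) = {s} := by
    ext s'
    simp only [mem_filter, mem_singleton]
    constructor
    · rintro ⟨hs', h'⟩
      exact h'.centre_unique hS hs' hs h
    · rintro rfl
      exact ⟨hs, h⟩
  rw [cameronMul, this, sup_singleton, id]

theorem cameronMul_of_forall_not (h : ∀ s ∈ S, ¬LineInPlane s p q) :
    cameronMul S p q = symmDiff p q := by
  rw [cameronMul, filter_false_of_mem h, sup_empty, symmDiff_bot]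

theorem cameronMul_comm (S : Finset (Finset β)) (p q : Finset β) :
    cameronMul S p q = cameronMul S q p := by
  have : ∀ s, LineInPlane s p q ↔ LineInPlane s q p := fun s => ⟨.symm, .symm⟩
  simp only [cameronMul, symmDiff_comm p q, this]

theorem cameronMul_self (S : Finset (Finset β)) (p : Finset β) : cameronMul S p p = ∅ := by
  rw [cameronMul_of_forall_not fun s _ h => h.2.2.2.1 (symmDiff_self p), symmDiff_self,
    bot_eq_empty]

theorem cameronMul_cameronMul (hS : IsPSTS S) (p q : Finset β) :
    cameronMul S p (cameronMul S p q) = q := by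
  by_cases hpq : ∃ s ∈ S, LineInPlane s p q
  · obtain ⟨s, hs, h⟩ := hpq
    rw [cameronMul_of_mem hS hs h, cameronMul_of_mem hS hs h.symmDiff_right.add_centre,
      ← symmDiff_assoc, symmDiff_symmDiff_cancel_right, symmDiff_symmDiff_cancel_left]
  · push Not at hpq
    rw [cameronMul_of_forall_not hpq, cameronMul_of_forall_not, symmDiff_symmDiff_cancel_left]
    intro s hs h
    refine hpq s hs ?_
    simpa only [symmDiff_symmDiff_cancel_left] using h.symmDiff_right

theorem cameronMul_ne_empty (hS : IsPSTS S) (h : p ≠ q) : cameronMul S p q ≠ ∅ := fun e =>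
  h (by rw [← cameronMul_cameronMul hS p q, e, ← cameronMul_self S p, cameronMul_cameronMul hS])

/-- The Steiner quasigroup of Cameron's system on the nonempty subsets of `β`. The last branch,
for an empty product, does not occur when `S` is a partial Steiner triple system. -/
def cameronOp (S : Finset (Finset β)) (p q : NESet β) : NESet β :=
  if h : p ≠ q ∧ (cameronMul S p.1 q.1).Nonempty then ⟨cameronMul S p.1 q.1, h.2⟩ else p

theorem cameronOp_self (p : NESet β) : cameronOp S p p = p :=
  dif_neg fun h => h.1 rfl

theorem coe_cameronOp (hS : IsPSTS S) {p q : NESet β} (h : p ≠ q) :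
    (cameronOp S p q : Finset β) = cameronMul S p q := by
  rw [cameronOp, dif_pos ⟨h, nonempty_iff_ne_empty.2
    (cameronMul_ne_empty hS (Subtype.coe_injective.ne h))⟩]

theorem isSteiner_cameronOp (hS : IsPSTS S) : IsSteiner (cameronOp S) where
  idem := cameronOp_self
  comm p q := by
    obtain rfl | h := eq_or_ne p q
    · rfl
    · exact Subtype.ext (by rw [coe_cameronOp hS h, coe_cameronOp hS h.symm, cameronMul_comm])
  inv p q := by
    obtain rfl | h := eq_or_ne p q
    · rw [cameronOp_self, cameronOp_self]
    have hne : p ≠ cameronOp S p q := fun e => q.2.ne_empty <| by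
      rw [← cameronMul_cameronMul hS p q, ← coe_cameronOp hS h, ← e, cameronMul_self]
    exact Subtype.ext (by rw [coe_cameronOp hS hne, coe_cameronOp hS h, cameronMul_cameronMul hS])

end Cameron

section CameronSymmetry

variable {β : Type*} {S : Finset (Finset β)}

/-- The permutation of the nonempty subsets of `β` induced by a permutation of `β`. -/
def neSetPerm (σ : Equiv.Perm β) : Equiv.Perm (NESet β) :=
  (Equiv.finsetCongr σ).subtypeEquiv fun _ => (map_nonempty).symm

theorem coe_neSetPerm (σ : Equiv.Perm β) (p : NESet β) :
    (neSetPerm σ p : Finset β) = p.1.image σ :=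
  map_eq_image _ _

theorem lineInPlane_image {σ : Equiv.Perm β} {s p q : Finset β} :
    LineInPlane (s.image σ) (p.image σ) (q.image σ) ↔ LineInPlane s p q := by
  simp only [LineInPlane, ← image_symmDiff _ _ σ.injective, image_subset_image_iff σ.injective,
    ne_eq, image_eq_empty, (image_injective σ.injective).eq_iff]

theorem cameronMul_image (hS : IsPSTS S) {σ : Equiv.Perm β} (hσ : IsAut S σ) (p q : Finset β) :
    cameronMul S (p.image σ) (q.image σ) = (cameronMul S p q).image σ := by
  by_cases hpq : ∃ s ∈ S, LineInPlane s p q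
  · obtain ⟨s, hs, h⟩ := hpq
    rw [cameronMul_of_mem hS hs h, cameronMul_of_mem hS ((hσ s).1 hs) (lineInPlane_image.2 h),
      image_symmDiff _ _ σ.injective, image_symmDiff _ _ σ.injective]
  · push Not at hpq
    rw [cameronMul_of_forall_not hpq, cameronMul_of_forall_not, image_symmDiff _ _ σ.injective]
    intro s hs h
    obtain ⟨t, rfl⟩ := (Equiv.finsetCongr σ).surjective s
    rw [Equiv.finsetCongr_apply, map_eq_image] at hs h
    exact hpq t ((hσ t).2 hs) (lineInPlane_image.1 h)

theorem isOpAut_neSetPerm (hS : IsPSTS S) {σ : Equiv.Perm β} (hσ : IsAut S σ) :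
    IsOpAut (cameronOp S) (neSetPerm σ) := by
  intro p q
  obtain rfl | h := eq_or_ne p q
  · rw [cameronOp_self, cameronOp_self]
  · refine Subtype.ext ?_
    rw [coe_cameronOp hS ((neSetPerm σ).injective.ne h), coe_neSetPerm, coe_neSetPerm,
      coe_neSetPerm, coe_cameronOp hS h, cameronMul_image hS hσ]

theorem sEl_injective : Function.Injective (sEl : β → NESet β) := fun _ _ h =>
  singleton_injective (congrArg Subtype.val h)

theorem symmDiff_singleton_of_notMem {a : β} {p : Finset β} (ha : a ∉ p) :
    symmDiff p {a} = insert a p := by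
  rw [(symmDiff_eq_sup _ _).2 (disjoint_singleton_right.2 ha), insert_eq, union_comm, sup_eq_union]

theorem lineInPlane_singleton (hS : IsPSTS S) {s : Finset β} (hs : s ∈ S) {a b : β} (hab : a ≠ b) :
    LineInPlane s {a} {b} ↔ a ∈ s ∧ b ∈ s := by
  have hcard := hS.1 s hs
  have hpair : symmDiff ({a} : Finset β) {b} = {a, b} :=
    (symmDiff_eq_sup _ _).2 (disjoint_singleton.2 hab)
  have hne : ∀ t : Finset β, t.card ≤ 2 → t ≠ s := by rintro t ht rfl; omega
  simp only [LineInPlane, singleton_subset_iff, hpair]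
  refine ⟨And.left, fun h => ⟨h, ⟨?_, hne _ ?_⟩, ⟨?_, hne _ ?_⟩, ?_, hne _ card_le_two⟩⟩ <;> simp

theorem cameronOp_sEl (hS : IsPSTS S) {a b c : β} (hab : a ≠ b) :
    cameronOp S (sEl a) (sEl b) = sEl c ↔ {a, b, c} ∈ S := by
  rw [Subtype.ext_iff, coe_cameronOp hS (sEl_injective.ne hab)]
  change cameronMul S {a} {b} = {c} ↔ _
  constructor
  · intro h
    by_cases hline : ∃ s ∈ S, LineInPlane s {a} {b}
    · obtain ⟨s, hs, hl⟩ := hline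
      rw [cameronMul_of_mem hS hs hl, ← symmDiff_right_inj (a := symmDiff {a} {b}),
        symmDiff_symmDiff_cancel_left] at h
      have hsub : s ⊆ {a, b, c} := by
        rw [h]
        intro x
        simp only [mem_symmDiff, mem_singleton, mem_insert]
        tauto
      rwa [← eq_of_subset_of_card_le hsub (card_le_three.trans (hS.1 s hs).ge)]
    · push Not at hline
      rw [cameronMul_of_forall_not hline, (symmDiff_eq_sup _ _).2 (disjoint_singleton.2 hab)] at h
      have ha : a ∈ ({c} : Finset β) := h ▸ mem_union_left _ (mem_singleton_self a)
      have hb : b ∈ ({c} : Finset β) := h ▸ mem_union_right _ (mem_singleton_self b)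
      exact absurd ((mem_singleton.1 ha).trans (mem_singleton.1 hb).symm) hab
  · intro h
    have hline := (lineInPlane_singleton hS h hab).2 (by simp)
    have hperm : ({a, b, c} : Finset β) = insert c {a, b} := by
      rw [insert_comm c a, pair_comm c b]
    have hc : c ∉ ({a, b} : Finset β) := fun hc => by
      have hcard := hS.1 _ h
      rw [hperm, insert_eq_of_mem hc] at hcard
      exact absurd hcard (card_le_two.trans_lt (by norm_num)).ne
    rw [cameronMul_of_mem hS h hline, hperm, (symmDiff_eq_sup _ _).2 (disjoint_singleton.2 hab),
      ← symmDiff_singleton_of_notMem hc]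
    exact symmDiff_symmDiff_cancel_left _ _

theorem cameronMul_of_isolated {o : β} (ho : ∀ s ∈ S, o ∉ s) {p : Finset β} (hp : o ∈ p)
    (q : Finset β) : cameronMul S p q = symmDiff p q :=
  cameronMul_of_forall_not fun s hs h => ho s hs (h.1.1 hp)

theorem eq_one_of_fixes_singletons (hS : IsPSTS S) {o : β} (ho : ∀ s ∈ S, o ∉ s)
    {g : Equiv.Perm (NESet β)} (hg : IsOpAut (cameronOp S) g) (hfix : ∀ x, g (sEl x) = sEl x) :
    g = 1 := by
  have hprod : ∀ {p q : NESet β}, o ∈ p.1 → p ≠ q → g p = p → g q = q →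
      ∀ {r : NESet β}, r.1 = symmDiff p.1 q.1 → g r = r := by
    intro p q hop hpq hp hq r hr
    have : cameronOp S p q = r :=
      Subtype.ext (by rw [coe_cameronOp hS hpq, cameronMul_of_isolated ho hop, hr])
    rw [← this, hg, hp, hq]
  have hinsert : ∀ p : Finset β, o ∉ p → ∀ r : NESet β, r.1 = insert o p → g r = r := by
    intro p
    induction p using Finset.induction_on with
    | empty => exact fun _ r hr => Subtype.ext (a2 := sEl o) hr ▸ hfix o
    | insert a p ha ih =>
      intro hop r hr
      rw [mem_insert, not_or] at hop
      refine hprod (p := ⟨insert o p, insert_nonempty o p⟩) (q := sEl a) (mem_insert_self o p)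
        (fun e => ?_) (ih hop.2 _ rfl) (hfix a) (hr.trans ?_)
      · exact hop.1 (mem_singleton.1 ((congrArg Subtype.val e).le (mem_insert_self o p)))
      · exact (insert_comm o a p).trans
          (symmDiff_singleton_of_notMem (by simp [ha, Ne.symm hop.1])).symm
  ext1 p
  by_cases hop : o ∈ p.1
  · exact hinsert (p.1.erase o) (notMem_erase o _) p (insert_erase hop).symm
  · refine hprod (p := ⟨insert o p, insert_nonempty o p.1⟩) (q := sEl o) (mem_insert_self o p.1)
      (fun e => ?_) (hinsert p.1 hop _ rfl) (hfix o) ?_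
    · obtain ⟨x, hx⟩ := p.2
      exact hop (mem_singleton.1 ((congrArg Subtype.val e).le (mem_insert_of_mem hx)) ▸ hx)
    · change p.1 = symmDiff (insert o p.1) {o}
      rw [← symmDiff_singleton_of_notMem hop, symmDiff_symmDiff_cancel_right]

end CameronSymmetry

section ColouredEnvelope

variable {α β : Type*} {TV : Finset (Finset α)} {ι : α ↪ β} {ℓ : β → ℕ}

/-- The copy of the partial triple system `TV` along the embedding `ι`; the points outside the range
of `ι` are isolated. -/
def mapTriples (ι : α ↪ β) (TV : Finset (Finset α)) : Finset (Finset β) :=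
  TV.image fun t => t.image ι

theorem mem_mapTriples {s : Finset β} : s ∈ mapTriples ι TV ↔ ∃ t ∈ TV, t.image ι = s := by
  simp only [mapTriples, mem_image]

theorem image_mem_mapTriples {t : Finset α} : t.image ι ∈ mapTriples ι TV ↔ t ∈ TV := by
  simp only [mem_mapTriples, (image_injective ι.injective).eq_iff, exists_eq_right]

theorem isPSTS_mapTriples (hV : IsPSTS TV) : IsPSTS (mapTriples ι TV) := by
  refine ⟨fun s hs => ?_, fun p q hpq s₁ hs₁ s₂ hs₂ hp₁ hq₁ hp₂ hq₂ => ?_⟩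
  · obtain ⟨t, ht, rfl⟩ := mem_mapTriples.1 hs
    rw [card_image_of_injective _ ι.injective, hV.1 t ht]
  · obtain ⟨t₁, ht₁, rfl⟩ := mem_mapTriples.1 hs₁
    obtain ⟨t₂, ht₂, rfl⟩ := mem_mapTriples.1 hs₂
    obtain ⟨a, ha, rfl⟩ := mem_image.1 hp₁
    obtain ⟨b, hb, rfl⟩ := mem_image.1 hq₁
    rw [ι.injective.mem_finset_image] at hp₂ hq₂
    rw [hV.2 a b (ne_of_apply_ne ι hpq) t₁ ht₁ t₂ ht₂ ha hb hp₂ hq₂]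

theorem notMem_of_mem_mapTriples {o : β} (ho : o ∉ Set.range ι) {s : Finset β}
    (hs : s ∈ mapTriples ι TV) : o ∉ s := by
  obtain ⟨t, -, rfl⟩ := mem_mapTriples.1 hs
  rw [mem_image]
  rintro ⟨a, -, rfl⟩
  exact ho ⟨a, rfl⟩

theorem isAut_mapTriples {σ : Equiv.Perm α} (hσ : IsAut TV σ) :
    IsAut (mapTriples ι TV) (σ.viaEmbedding ι) := by
  have himage : ∀ t : Finset α,
      (t.image ι).image (σ.viaEmbedding ι) = (t.image σ).image ι := fun t => by
    simp only [image_image, Function.comp_def, Equiv.Perm.viaEmbedding_apply]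
  intro s
  constructor
  · intro hs
    obtain ⟨t, ht, rfl⟩ := mem_mapTriples.1 hs
    rwa [himage, image_mem_mapTriples, ← hσ]
  · intro hs
    obtain ⟨t, ht, hts⟩ := mem_mapTriples.1 hs
    obtain ⟨t, rfl⟩ := (Equiv.finsetCongr σ).surjective t
    rw [Equiv.finsetCongr_apply, map_eq_image, Equiv.coe_toEmbedding] at ht hts
    rw [← himage, (image_injective (Equiv.injective _)).eq_iff] at hts
    rwa [← hts, image_mem_mapTriples, hσ]

/-- The colouring of the nonempty subsets of `β` that recognises, by its even values, the
singletons and their labels. -/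
def labelColour (ℓ : β → ℕ) (p : NESet β) : ℕ :=
  if p.1.card = 1 then 2 * ∑ x ∈ p.1, ℓ x else 1

theorem labelColour_sEl (x : β) : labelColour ℓ (sEl x) = 2 * ℓ x := by
  simp [labelColour, sEl]

theorem exists_eq_sEl_of_labelColour_eq {p : NESet β} {x : β}
    (h : labelColour ℓ p = labelColour ℓ (sEl x)) : ∃ y, p = sEl y ∧ ℓ y = ℓ x := by
  rw [labelColour_sEl] at h
  by_cases hp : p.1.card = 1
  · obtain ⟨y, hy⟩ := card_eq_one.1 hp
    obtain rfl : p = sEl y := Subtype.ext hy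
    rw [labelColour_sEl] at h
    exact ⟨y, rfl, Nat.eq_of_mul_eq_mul_left two_pos h⟩
  · rw [labelColour, if_neg hp] at h
    omega

theorem labelColour_neSetPerm {τ : Equiv.Perm β} (hτ : ∀ x, ℓ (τ x) = ℓ x) (p : NESet β) :
    labelColour ℓ (neSetPerm τ p) = labelColour ℓ p := by
  simp only [labelColour, coe_neSetPerm, card_image_of_injective _ τ.injective,
    sum_image τ.injective.injOn, hτ]

theorem isEnvelope_cameronOp (hV : IsPSTS TV) {o : β} (ho : o ∉ Set.range ι)
    (hzero : ∀ x, ℓ x = 0 ↔ x ∈ Set.range ι) (hinj : Set.InjOn ℓ (Set.range ι)ᶜ) :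
    IsEnvelope TV (cameronOp (mapTriples ι TV)) (labelColour ℓ) fun a => sEl (ι a) where
  steiner := isSteiner_cameronOp (isPSTS_mapTriples hV)
  inj := sEl_injective.comp ι.injective
  triple a b c hab := by
    rw [cameronOp_sEl (isPSTS_mapTriples hV) (ι.injective.ne hab),
      ← image_mem_mapTriples (ι := ι), image_insert, image_insert, image_singleton]
  colour a := by rw [labelColour_sEl, (hzero _).2 ⟨a, rfl⟩]
  lift σ hσ := by
    refine ⟨neSetPerm (σ.viaEmbedding ι), isOpAut_neSetPerm (isPSTS_mapTriples hV)
      (isAut_mapTriples hσ), labelColour_neSetPerm fun x => ?_, fun a => Subtype.ext ?_⟩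
    · by_cases hx : x ∈ Set.range ι
      · obtain ⟨a, rfl⟩ := hx
        rw [Equiv.Perm.viaEmbedding_apply, (hzero _).2 ⟨a, rfl⟩, (hzero _).2 ⟨σ a, rfl⟩]
      · rw [Equiv.Perm.viaEmbedding_apply_of_notMem _ _ _ hx]
    · rw [coe_neSetPerm, sEl, image_singleton, Equiv.Perm.viaEmbedding_apply, sEl]
  restrict g _ hcol a := by
    obtain ⟨y, hy, hℓ⟩ := exists_eq_sEl_of_labelColour_eq (hcol (sEl (ι a)))
    obtain ⟨b, rfl⟩ := (hzero y).1 (hℓ.trans ((hzero _).2 ⟨a, rfl⟩))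
    exact ⟨b, hy⟩
  faithful g hg hcol hfix := by
    refine eq_one_of_fixes_singletons (isPSTS_mapTriples hV)
      (fun s => notMem_of_mem_mapTriples ho) hg fun x => ?_
    by_cases hx : x ∈ Set.range ι
    · obtain ⟨a, rfl⟩ := hx
      exact hfix a
    · obtain ⟨y, hy, hℓ⟩ := exists_eq_sEl_of_labelColour_eq (hcol (sEl x))
      rw [hy, hinj (fun hy' => hx ((hzero x).1 (hℓ ▸ (hzero y).2 hy'))) hx hℓ]

theorem card_neSet [Fintype β] : Fintype.card (NESet β) = 2 ^ Fintype.card β - 1 := by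
  rw [Fintype.card_subtype]
  simp only [nonempty_iff_ne_empty, filter_ne', card_erase_of_mem (mem_univ _), card_univ,
    Fintype.card_finset]

theorem two_pow_sub_one_mod_six (n : ℕ) :
    (2 ^ (2 * n + 2) - 1) % 6 = 3 ∧ (2 ^ (2 * n + 3) - 1) % 6 = 1 := by
  have h : 2 ^ (2 * n + 2) % 6 = 4 := by
    induction n with
    | zero => rfl
    | succ n ih => rw [show 2 * (n + 1) + 2 = 2 * n + 2 + 2 by ring, pow_add]; omega
  have hsucc : 2 ^ (2 * n + 3) = 2 ^ (2 * n + 2) * 2 := pow_succ 2 (2 * n + 2)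
  omega

theorem exists_isEnvelope_colour {α : Type*} [Fintype α] {TV : Finset (Finset α)} (hV : IsPSTS TV)
    {r : ℕ} (hr : r = 1 ∨ r = 3) (N : ℕ) :
    ∃ (k : ℕ) (m : _) (f : NESet (Fin k ⊕ α) → ℕ) (φ : _), IsEnvelope TV m f φ ∧
      Fintype.card (NESet (Fin k ⊕ α)) % 6 = r ∧ N ≤ Fintype.card (NESet (Fin k ⊕ α)) := by
  set n := Fintype.card α
  obtain ⟨e, he, hNe, hmod⟩ : ∃ e, n < e ∧ N < e ∧ (2 ^ e - 1) % 6 = r := by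
    have hpow := two_pow_sub_one_mod_six (n + N)
    rcases hr with rfl | rfl
    · exact ⟨2 * (n + N) + 3, by omega, by omega, hpow.2⟩
    · exact ⟨2 * (n + N) + 2, by omega, by omega, hpow.1⟩
  have hcard : Fintype.card (NESet (Fin (e - n) ⊕ α)) = 2 ^ e - 1 := by
    rw [card_neSet, Fintype.card_sum, Fintype.card_fin, Nat.sub_add_cancel he.le]
  refine ⟨e - n, _, _, _, isEnvelope_cameronOp (ι := Function.Embedding.inr)
    (ℓ := Sum.elim (fun i => i.1 + 1) fun _ => 0) (o := Sum.inl ⟨0, Nat.sub_pos_of_lt he⟩)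
    hV ?_ ?_ ?_, hcard ▸ hmod, ?_⟩
  · simp
  · simp
  · rintro (i | a) hi (j | b) hj hij
    · simpa [Fin.ext_iff] using hij
    all_goals simp at hi hj
  · have := Nat.lt_two_pow_self (n := e)
    omega

end ColouredEnvelope

/-! ### Blowing up a Steiner quasigroup -/

/-- `F` is a Steiner quasigroup on `X ⊕ A` in which the points of `X` form the subsystem `mX` and
act on `A` by the involutions `σ x`. -/
structure IsFibreSystem {X A : Type*} (mX : X → X → X) (σ : X → A → A)
    (F : X ⊕ A → X ⊕ A → X ⊕ A) : Prop where
  steiner : IsSteiner F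
  sub : ∀ x y, F (Sum.inl x) (Sum.inl y) = Sum.inl (mX x y)
  act : ∀ x a, F (Sum.inl x) (Sum.inr a) = Sum.inr (σ x a)

/-- The inclusion of the fibre over `v` in the blow-up. -/
def fibreIncl {X P A : Type*} (v : P) : X ⊕ A → X ⊕ P × A := Sum.map id (Prod.mk v)

/-- The blow-up of the Steiner quasigroup `mP`: each point is replaced by a copy of `A`, each
`X ⊕ {v} × A` carries the system `F`, and the products of points of different fibres are twisted by
the sums of `c` along the lines of `mP`. -/
def blowUp {X P A : Type*} [AddCommGroup A] (mX : X → X → X) (σ : X → A → A)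
    (F : X ⊕ A → X ⊕ A → X ⊕ A) (mP : P → P → P) (c : P → A) :
    X ⊕ P × A → X ⊕ P × A → X ⊕ P × A
  | Sum.inl x, Sum.inl y => Sum.inl (mX x y)
  | Sum.inl x, Sum.inr (v, a) => Sum.inr (v, σ x a)
  | Sum.inr (v, a), Sum.inl x => Sum.inr (v, σ x a)
  | Sum.inr (v, a), Sum.inr (w, b) =>
    if v = w then fibreIncl v (F (Sum.inr a) (Sum.inr b))
    else Sum.inr (mP v w, c v + c w + c (mP v w) - a - b)

theorem fibre_cases {X P A : Type*} [Nonempty P] (p q : X ⊕ P × A) :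
    (∃ v p' q', p = fibreIncl v p' ∧ q = fibreIncl v q') ∨
      ∃ v w a b, v ≠ w ∧ p = Sum.inr (v, a) ∧ q = Sum.inr (w, b) := by
  rcases p with x | ⟨v, a⟩ <;> rcases q with y | ⟨w, b⟩
  · exact .inl ⟨Classical.arbitrary P, .inl x, .inl y, rfl, rfl⟩
  · exact .inl ⟨w, .inl x, .inr b, rfl, rfl⟩
  · exact .inl ⟨v, .inr a, .inl y, rfl, rfl⟩
  · obtain rfl | h := eq_or_ne v w
    · exact .inl ⟨v, .inr a, .inr b, rfl, rfl⟩
    · exact .inr ⟨v, w, a, b, h, rfl, rfl⟩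

namespace IsFibreSystem

variable {X A : Type*} {mX : X → X → X} {σ : X → A → A} {F : X ⊕ A → X ⊕ A → X ⊕ A}

theorem invol (hF : IsFibreSystem mX σ F) (x : X) (a : A) : σ x (σ x a) = a := by
  have := hF.steiner.inv (Sum.inl x) (Sum.inr a)
  rwa [hF.act, hF.act, Sum.inr.injEq] at this

theorem eq_of_apply_eq (hF : IsFibreSystem mX σ F) {x y : X} {a : A} (h : σ x a = σ y a) :
    x = y := by
  have : F (Sum.inr a) (Sum.inl x) = F (Sum.inr a) (Sum.inl y) := by
    rw [hF.steiner.comm _ (Sum.inl x), hF.steiner.comm _ (Sum.inl y), hF.act, hF.act, h]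
  exact Sum.inl_injective (hF.steiner.right_injective _ this)

end IsFibreSystem

section BlowUp

variable {X P A : Type*} [AddCommGroup A] {mX : X → X → X} {σ : X → A → A}
  {F : X ⊕ A → X ⊕ A → X ⊕ A} {mP : P → P → P} {c : P → A}

theorem blowUp_inl_inr (x : X) (v : P) (a : A) :
    blowUp mX σ F mP c (Sum.inl x) (Sum.inr (v, a)) = Sum.inr (v, σ x a) := rfl

theorem blowUp_of_ne {v w : P} (h : v ≠ w) (a b : A) :
    blowUp mX σ F mP c (Sum.inr (v, a)) (Sum.inr (w, b)) =
      Sum.inr (mP v w, c v + c w + c (mP v w) - a - b) :=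
  if_neg h

theorem blowUp_fibreIncl (hF : IsFibreSystem mX σ F) (v : P) (p q : X ⊕ A) :
    blowUp mX σ F mP c (fibreIncl v p) (fibreIncl v q) = fibreIncl v (F p q) := by
  rcases p with x | a <;> rcases q with y | b
  · rw [hF.sub]; rfl
  · rw [hF.act]; rfl
  · rw [hF.steiner.comm, hF.act]; rfl
  · exact if_pos rfl

theorem isSteiner_blowUp [Nonempty P] (hF : IsFibreSystem mX σ F) (hP : IsSteiner mP) :
    IsSteiner (blowUp mX σ F mP c) where
  idem p := by
    obtain ⟨v, p, -, rfl, -⟩ | ⟨v, w, a, b, h, rfl, h'⟩ := fibre_cases p p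
    · rw [blowUp_fibreIncl hF, hF.steiner.idem]
    · simp [h] at h'
  comm p q := by
    obtain ⟨v, p, q, rfl, rfl⟩ | ⟨v, w, a, b, h, rfl, rfl⟩ := fibre_cases p q
    · rw [blowUp_fibreIncl hF, blowUp_fibreIncl hF, hF.steiner.comm]
    · rw [blowUp_of_ne h, blowUp_of_ne h.symm, hP.comm w v, add_comm (c w), sub_right_comm]
  inv p q := by
    obtain ⟨v, p, q, rfl, rfl⟩ | ⟨v, w, a, b, h, rfl, rfl⟩ := fibre_cases p q
    · rw [blowUp_fibreIncl hF, blowUp_fibreIncl hF, hF.steiner.inv]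
    · rw [blowUp_of_ne h, blowUp_of_ne (hP.ne_left h).symm, hP.inv]
      congr 2
      abel

theorem isOpAut_sumCongr_blowUp [Nonempty P] (hF : IsFibreSystem mX σ F) {π : Equiv.Perm P}
    (hπ : IsOpAut mP π) (hc : ∀ v, c (π v) = c v) :
    IsOpAut (blowUp mX σ F mP c) (Equiv.sumCongr 1 (Equiv.prodCongr π 1)) := by
  have hincl : ∀ v p, Equiv.sumCongr 1 (Equiv.prodCongr π 1) (fibreIncl v p : X ⊕ P × A) =
      fibreIncl (π v) p := by
    rintro v (x | a) <;> rfl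
  intro p q
  obtain ⟨v, p, q, rfl, rfl⟩ | ⟨v, w, a, b, h, rfl, rfl⟩ := fibre_cases p q
  · simp only [blowUp_fibreIncl hF, hincl]
  · simp only [blowUp_of_ne h, Equiv.sumCongr_apply, Sum.map_inr, Equiv.prodCongr_apply,
      Prod.map_apply, Equiv.Perm.coe_one, id, blowUp_of_ne (π.injective.ne h), ← hπ v w, hc]

end BlowUp

/-! ### Recognising the subsystem `X` -/

/-- The pairs `(q, r)` for which the square of the composed translations by `p` and `q` fixes `r`.
Their number is an automorphism invariant of `p` that separates `X` from the fibres of a blow-up. -/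
def wordPairs {U : Type*} [Fintype U] (m : U → U → U) (p : U) : Finset (U × U) :=
  {x : U × U | m p (m x.1 (m p (m x.1 x.2))) = x.2}

theorem mem_wordPairs {U : Type*} [Fintype U] {m : U → U → U} {p q r : U} :
    (q, r) ∈ wordPairs m p ↔ m p (m q (m p (m q r))) = r :=
  mem_filter_univ _

theorem IsOpAut.card_wordPairs_eq {U : Type*} [Fintype U] {m : U → U → U} {g : Equiv.Perm U}
    (hg : IsOpAut m g) (p : U) : #(wordPairs m (g p)) = #(wordPairs m p) := by
  refine (card_equiv (Equiv.prodCongr g g) fun ⟨q, r⟩ => ?_).symm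
  simp only [mem_wordPairs, Equiv.prodCongr_apply, Prod.map_apply, ← hg _ _, g.injective.eq_iff]

/-- The pairs of points which, with a point of the fibre over `v`, do not span a configuration in
general position. -/
def degeneratePairs (X A : Type*) {P : Type*} [Fintype X] [Fintype P] [Fintype A]
    (mP : P → P → P) (v : P) : Finset ((X ⊕ P × A) × (X ⊕ P × A)) :=
  univ.image (fibreIncl v) ×ˢ univ ∪ univ ×ˢ univ.image (fibreIncl v) ∪
    univ.image (fun y : (P × A) × A => (Sum.inr y.1, Sum.inr (y.1.1, y.2))) ∪
    univ.image (fun y : (P × A) × A => (Sum.inr y.1, Sum.inr (mP v y.1.1, y.2)))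

theorem card_degeneratePairs_le {X P A : Type*} [Fintype X] [Fintype P] [Fintype A]
    (mP : P → P → P) (v : P) :
    #(degeneratePairs X A mP v) ≤ (2 * Fintype.card X + 4 * Fintype.card A) *
      (Fintype.card X + Fintype.card P * Fintype.card A) := by
  set u := Fintype.card X + Fintype.card P * Fintype.card A
  have hcard : Fintype.card (X ⊕ P × A) = u := by rw [Fintype.card_sum, Fintype.card_prod]
  have hfibre : #(univ.image (fibreIncl v : X ⊕ A → X ⊕ P × A)) ≤
      Fintype.card X + Fintype.card A :=
    card_image_le.trans_eq (by rw [card_univ, Fintype.card_sum])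
  have hpair : ∀ f : (P × A) × A → (X ⊕ P × A) × (X ⊕ P × A),
      #(univ.image f) ≤ Fintype.card A * u := fun f => by
    refine card_image_le.trans ?_
    rw [card_univ, Fintype.card_prod, Fintype.card_prod, mul_comm]
    exact Nat.mul_le_mul_left _ (Nat.le_add_left _ _)
  set D := univ.image (fibreIncl v : X ⊕ A → X ⊕ P × A)
  calc #(degeneratePairs X A mP v)
      ≤ #(D ×ˢ univ) + #(univ ×ˢ D) + Fintype.card A * u + Fintype.card A * u :=
        (card_union_le _ _).trans <| add_le_add ((card_union_le _ _).trans <|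
          add_le_add (card_union_le _ _) (hpair _)) (hpair _)
    _ = 2 * #D * u + 2 * Fintype.card A * u := by
        rw [card_product, card_product, card_univ, hcard]
        ring
    _ ≤ 2 * (Fintype.card X + Fintype.card A) * u + 2 * Fintype.card A * u := by gcongr
    _ = (2 * Fintype.card X + 4 * Fintype.card A) * u := by ring

section Count

variable {X P A : Type*} [AddCommGroup A] {mX : X → X → X} {σ : X → A → A}
  {F : X ⊕ A → X ⊕ A → X ⊕ A} {mP : P → P → P} {c : P → A}

theorem exists_add_self_eq (hP : IsSteiner mP) {v w z : P} (a : A) (hzv : z ≠ v)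
    (hzw : z ≠ w) (hz : z ≠ mP v w) :
    ∃ e : A, ∀ b d, blowUp mX σ F mP c (Sum.inr (v, a)) (blowUp mX σ F mP c (Sum.inr (w, b))
      (blowUp mX σ F mP c (Sum.inr (v, a)) (blowUp mX σ F mP c (Sum.inr (w, b))
        (Sum.inr (z, d))))) = Sum.inr (z, d) → b + b = e := by
  have h₁ : v ≠ mP w z := fun h => hz (by rw [hP.comm v, h, hP.inv])
  have h₂ : w ≠ mP v (mP w z) := fun h => hzv <|
    hP.right_injective w (by rw [← hP.inv v (mP w z), ← h, hP.comm v])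
  have h₃ : v ≠ mP w (mP v (mP w z)) := fun h => hP.ne_left hzw.symm <|
    hP.right_injective v (by rw [hP.comm v w, h, hP.inv, ← h])
  refine ⟨a + a + (c w + c z + c (mP w z)) - (c v + c (mP w z) + c (mP v (mP w z))) +
    (c w + c (mP v (mP w z)) + c (mP w (mP v (mP w z)))) -
    (c v + c (mP w (mP v (mP w z))) + c (mP v (mP w (mP v (mP w z))))), fun b d h => ?_⟩
  rw [blowUp_of_ne hzw.symm, blowUp_of_ne h₁, blowUp_of_ne h₂, blowUp_of_ne h₃,
    Sum.inr.injEq, Prod.mk.injEq, sub_eq_iff_eq_add, sub_eq_iff_eq_add] at h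
  rw [h.2]
  abel

variable [Fintype X] [Fintype P] [Fintype A]

theorem mul_le_card_wordPairs_inl (hF : IsFibreSystem mX σ F) (hP : IsSteiner mP) (x : X) (δ : A) :
    (Fintype.card P * Fintype.card P - Fintype.card P) *
      (#{s | σ x s = s + δ} * #{s | σ x s = s + δ}) ≤
      #(wordPairs (blowUp mX σ F mP c) (Sum.inl x)) := by
  set S : Finset A := {s | σ x s = s + δ} with hS
  calc _ = #((univ : Finset P).offDiag ×ˢ (S ×ˢ S)) := by
        rw [card_product, card_product, offDiag_card, card_univ]
    _ ≤ _ := card_le_card_of_injOn (fun y =>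
        (Sum.inr (y.1.1, c y.1.1 + c y.1.2 + c (mP y.1.1 y.1.2) - y.2.1 - σ x y.2.2),
          Sum.inr (y.1.2, σ x y.2.2))) ?_ ?_
  · rintro ⟨⟨v, w⟩, s, t⟩ hy
    simp only [hS, coe_product, Set.mem_prod, mem_coe, mem_offDiag, mem_univ, true_and,
      mem_filter] at hy
    obtain ⟨hvw, hs, ht⟩ := hy
    have hs' : c v + c w + c (mP v w) - (c v + c w + c (mP v w) - s - σ x t) - σ x t = s := by
      abel
    have ht' : c v + c (mP v w) + c w - (c v + c w + c (mP v w) - s - σ x t) - (s + δ) = t := by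
      rw [ht]
      abel
    rw [mem_coe, mem_wordPairs, blowUp_of_ne hvw, blowUp_inl_inr,
      blowUp_of_ne (hP.ne_left hvw).symm, hP.inv,
      blowUp_inl_inr, hs', hs, ht']
  · rintro ⟨⟨v, w⟩, s, t⟩ _ ⟨⟨v', w'⟩, s', t'⟩ _ heq
    simp only [Prod.mk.injEq, Sum.inr.injEq] at heq
    obtain ⟨⟨rfl, hs⟩, rfl, ht⟩ := heq
    obtain rfl : t = t' := by rw [← hF.invol x t, ht, hF.invol]
    obtain rfl : s = s' := by simpa using hs
    rfl

theorem card_wordPairs_inr_le (hP : IsSteiner mP) (h2 : ∀ e : A, #{b | b + b = e} ≤ 2) (v : P)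
    (a : A) :
    #(wordPairs (blowUp mX σ F mP c) (Sum.inr (v, a))) ≤
      (2 * Fintype.card X + 4 * Fintype.card A) *
        (Fintype.card X + Fintype.card P * Fintype.card A) +
      Fintype.card P * (Fintype.card P * Fintype.card A) * 2 := by
  have he : ∀ w z : P, ∃ e : A, z ≠ v → z ≠ w → z ≠ mP v w → ∀ b d,
      blowUp mX σ F mP c (Sum.inr (v, a)) (blowUp mX σ F mP c (Sum.inr (w, b))
        (blowUp mX σ F mP c (Sum.inr (v, a)) (blowUp mX σ F mP c (Sum.inr (w, b))
          (Sum.inr (z, d))))) = Sum.inr (z, d) → b + b = e := fun w z => by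
    by_cases h : z ≠ v ∧ z ≠ w ∧ z ≠ mP v w
    · obtain ⟨e, he⟩ := exists_add_self_eq (mX := mX) (σ := σ) (F := F) (c := c) hP a
        h.1 h.2.1 h.2.2
      exact ⟨e, fun _ _ _ => he⟩
    · exact ⟨0, fun h₁ h₂ h₃ => absurd ⟨h₁, h₂, h₃⟩ h⟩
  choose e he using he
  let G : Finset ((X ⊕ P × A) × (X ⊕ P × A)) := (univ : Finset (P × P × A)).biUnion fun y =>
    ({b | b + b = e y.1 y.2.1} : Finset A).image fun b => (Sum.inr (y.1, b), Sum.inr y.2)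
  have hG : #G ≤ Fintype.card P * (Fintype.card P * Fintype.card A) * 2 := by
    rw [← Fintype.card_prod, ← Fintype.card_prod, ← card_univ]
    exact card_biUnion_le_card_mul _ _ _ fun y _ => card_image_le.trans (h2 _)
  refine (card_le_card ?_).trans ((card_union_le (degeneratePairs X A mP v) G).trans
    (add_le_add (card_degeneratePairs_le mP v) hG))
  rintro ⟨q, r⟩ hy
  rw [mem_wordPairs] at hy
  by_contra hqr
  simp only [degeneratePairs, mem_union, mem_product, mem_image, mem_univ, true_and, and_true,
    not_or, not_exists] at hqr
  obtain ⟨⟨⟨⟨hq, hr⟩, hqr⟩, hqr'⟩, hG'⟩ := hqr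
  rcases q with x | ⟨w, b⟩
  · exact hq (.inl x) rfl
  rcases r with x | ⟨z, d⟩
  · exact hr (.inl x) rfl
  have hzv : z ≠ v := by rintro rfl; exact hr (.inr d) rfl
  have hzw : z ≠ w := by rintro rfl; exact hqr ((z, b), d) rfl
  have hz : z ≠ mP v w := by rintro rfl; exact hqr' ((w, b), d) rfl
  refine hG' (mem_biUnion.2 ⟨(w, z, d), mem_univ _, mem_image.2 ⟨b, ?_, rfl⟩⟩)
  exact mem_filter.2 ⟨mem_univ _, he w z hzv hzw hz b d hy⟩

theorem card_wordPairs_inr_lt_inl (hF : IsFibreSystem mX σ F) (hP : IsSteiner mP)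
    (h2 : ∀ e : A, #{b | b + b = e} ≤ 2)
    (hσ : ∀ x, ∃ δ, Fintype.card A ≤ 4 * #{s | σ x s = s + δ})
    (hX : Fintype.card X ≤ Fintype.card A) (hw : 127 ≤ Fintype.card P)
    (hA : 2 * Fintype.card P ^ 2 ≤ Fintype.card A) (p : P × A) (x : X) :
    #(wordPairs (blowUp mX σ F mP c) (Sum.inr p)) <
      #(wordPairs (blowUp mX σ F mP c) (Sum.inl x)) := by
  obtain ⟨δ, hδ⟩ := hσ x
  refine (card_wordPairs_inr_le hP h2 p.1 p.2).trans_lt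
    (lt_of_lt_of_le ?_ (mul_le_card_wordPairs_inl hF hP x δ))
  set n := #{s | σ x s = s + δ}
  generalize Fintype.card X = k, Fintype.card P = w, Fintype.card A = m at *
  have hm : 0 < m := by nlinarith
  have hn : m * m ≤ 16 * (n * n) := by nlinarith
  have hquad : 16 * (6 * (w + 1) + 1) < w * w - w := by
    obtain ⟨t, rfl⟩ := Nat.exists_eq_add_of_le hw
    apply Nat.lt_sub_of_add_lt
    nlinarith
  suffices h : 16 * ((2 * k + 4 * m) * (k + w * m) + w * (w * m) * 2) <
      16 * ((w * w - w) * (n * n)) from Nat.lt_of_mul_lt_mul_left h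
  calc 16 * ((2 * k + 4 * m) * (k + w * m) + w * (w * m) * 2)
      = 16 * ((2 * k + 4 * m) * (k + w * m) + 2 * w ^ 2 * m) := by ring
    _ ≤ 16 * ((2 * m + 4 * m) * (m + w * m) + m * m) := by gcongr
    _ = 16 * (6 * (w + 1) + 1) * (m * m) := by ring
    _ < (w * w - w) * (m * m) := Nat.mul_lt_mul_of_pos_right hquad (Nat.mul_pos hm hm)
    _ ≤ (w * w - w) * (16 * (n * n)) := by gcongr
    _ = 16 * ((w * w - w) * (n * n)) := by ring

end Count

/-! ### The automorphisms of a blow-up -/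

/-- The involutions `σ x` generate a transitive group, and the only affine bijection of `A` that
permutes them is the identity. -/
structure IsRigidFamily {X A : Type*} [AddCommGroup A] (σ : X → A → A) : Prop where
  connected : ∀ B : Set A, (∀ x, ∀ s ∈ B, σ x s ∈ B) → B.Nonempty → B = Set.univ
  eq_id : ∀ θ : A → A, Function.Injective θ → (∀ a b, θ (a + b) = θ a + θ b - θ 0) →
    ∀ β : X → X, (∀ x a, θ (σ x a) = σ (β x) (θ a)) → θ = id

section Automorphisms

variable {X P A : Type*} [AddCommGroup A] {mX : X → X → X} {σ : X → A → A}
  {F : X ⊕ A → X ⊕ A → X ⊕ A} {mP : P → P → P} {c : P → A} {g : Equiv.Perm (X ⊕ P × A)}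

theorem exists_fibrewise_of_isOpAut_blowUp [Finite P] [Finite A] (hσ : IsRigidFamily σ)
    (hg : IsOpAut (blowUp mX σ F mP c) g) (hl : ∀ x, ∃ y, g (Sum.inl x) = Sum.inl y)
    (hr : ∀ p, ∃ q, g (Sum.inr p) = Sum.inr q) :
    ∃ (β : X → X) (π : Equiv.Perm P) (θ : P → A → A),
      (∀ x, g (Sum.inl x) = Sum.inl (β x)) ∧ (∀ v a, g (Sum.inr (v, a)) = Sum.inr (π v, θ v a)) ∧
      (∀ v, Function.Injective (θ v)) ∧ ∀ v x a, θ v (σ x a) = σ (β x) (θ v a) := by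
  choose β hβ using hl
  choose G hG using hr
  have hGσ : ∀ x v a, G (v, σ x a) = ((G (v, a)).1, σ (β x) (G (v, a)).2) := fun x v a => by
    have h := hg (Sum.inl x) (Sum.inr (v, a))
    rw [blowUp_inl_inr, hG, hβ, hG] at h
    exact Sum.inr_injective h
  have hG_fst : ∀ v a, (G (v, a)).1 = (G (v, 0)).1 := fun v a => by
    have h := hσ.connected {s | (G (v, s)).1 = (G (v, 0)).1}
      (fun x s hs => by rwa [Set.mem_ofPred_eq, hGσ]) ⟨0, rfl⟩
    exact h.ge (Set.mem_univ a)
  have hG_eq : ∀ v a, G (v, a) = ((G (v, 0)).1, (G (v, a)).2) := fun v a =>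
    Prod.ext (hG_fst v a) rfl
  have hG_inj : Function.Injective G := fun p q h =>
    Sum.inr_injective (g.injective (by rw [hG, hG, h]))
  have hθ : ∀ v, Function.Injective fun a => (G (v, a)).2 := fun v a b h =>
    congrArg Prod.snd (hG_inj ((hG_eq v a).trans ((congrArg _ h).trans (hG_eq v b).symm)))
  have hπ : Function.Injective fun v => (G (v, 0)).1 := fun v w h => by
    obtain ⟨a, ha⟩ := Finite.surjective_of_injective (hθ v) (G (w, 0)).2
    exact congrArg Prod.fst (hG_inj ((hG_eq v a).trans (Prod.ext h ha)))
  exact ⟨β, Equiv.ofBijective _ (Finite.injective_iff_bijective.1 hπ), fun v a => (G (v, a)).2, hβ,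
    fun v a => by rw [hG, hG_eq]; rfl, hθ, fun v x a => congrArg Prod.snd (hGσ x v a)⟩

/-- Comparing the products of `(v, a), (w, b)` and of `(v, a + b), (w, 0)` shows that `g` is affine
on every fibre. -/
theorem isOpAut_blowUp_affine [Nontrivial P] (hg : IsOpAut (blowUp mX σ F mP c) g)
    {π : Equiv.Perm P} {θ : P → A → A} (hgθ : ∀ v a, g (Sum.inr (v, a)) = Sum.inr (π v, θ v a))
    (v : P) (a b : A) : θ v (a + b) = θ v a + θ v b - θ v 0 := by
  obtain ⟨w, hw⟩ := exists_ne v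
  have hmul : ∀ a b, θ (mP v w) (c v + c w + c (mP v w) - (a + b)) =
      c (π v) + c (π w) + c (mP (π v) (π w)) - (θ v a + θ w b) := fun a b => by
    have h := hg (Sum.inr (v, a)) (Sum.inr (w, b))
    rw [blowUp_of_ne hw.symm, hgθ, hgθ, hgθ, blowUp_of_ne (π.injective.ne hw.symm), sub_sub,
      sub_sub] at h
    exact congrArg Prod.snd (Sum.inr_injective h)
  have hsum : ∀ a b, θ v a + θ w b = θ v (a + b) + θ w 0 := fun a b => by
    have h := hmul (a + b) 0
    rw [add_zero, hmul, sub_right_inj] at h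
    exact h
  have h₀ := hsum 0 b
  rw [zero_add] at h₀
  rw [eq_sub_iff_add_eq, ← add_left_inj (θ w 0), add_right_comm, ← hsum, add_assoc, add_assoc,
    add_comm (θ w b), h₀]

theorem exists_perm_of_isOpAut_blowUp [Finite P] [Nontrivial P] [Finite A]
    (hF : IsFibreSystem mX σ F) (hP : IsSteiner mP) (hσ : IsRigidFamily σ)
    (hg : IsOpAut (blowUp mX σ F mP c) g) (hl : ∀ x, ∃ y, g (Sum.inl x) = Sum.inl y)
    (hr : ∀ p, ∃ q, g (Sum.inr p) = Sum.inr q) :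
    ∃ π : Equiv.Perm P, IsOpAut mP π ∧
      (∀ v w, v ≠ w → c (π v) + c (π w) + c (π (mP v w)) = c v + c w + c (mP v w)) ∧
      g = Equiv.sumCongr 1 (Equiv.prodCongr π 1) := by
  obtain ⟨β, π, θ, hβ, hθ, hθi, hθσ⟩ := exists_fibrewise_of_isOpAut_blowUp hσ hg hl hr
  obtain rfl : θ = fun _ => id := funext fun v =>
    hσ.eq_id _ (hθi v) (isOpAut_blowUp_affine hg hθ v) β (hθσ v)
  have hmul : ∀ v w, v ≠ w → π (mP v w) = mP (π v) (π w) ∧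
      c v + c w + c (mP v w) = c (π v) + c (π w) + c (mP (π v) (π w)) := fun v w hvw => by
    have h := hg (Sum.inr (v, 0)) (Sum.inr (w, 0))
    rw [blowUp_of_ne hvw, hθ, hθ, hθ, blowUp_of_ne (π.injective.ne hvw)] at h
    simpa only [Sum.inr.injEq, Prod.mk.injEq, id, sub_zero] using h
  refine ⟨π, fun v w => ?_, fun v w hvw => ?_, ?_⟩
  · obtain rfl | hvw := eq_or_ne v w
    · rw [hP.idem, hP.idem]
    · exact (hmul v w hvw).1
  · rw [(hmul v w hvw).1, (hmul v w hvw).2]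
  · have hβx : ∀ x, β x = x := fun x =>
      (hF.eq_of_apply_eq (hθσ (Classical.arbitrary P) x 0)).symm
    ext (x | ⟨v, a⟩)
    · rw [hβ, hβx]; rfl
    · rw [hθ]; rfl

end Automorphisms

/-- Summing over the lines through a point `v` gives `(n - 3) d v = 0`, where `n` is the order. -/
theorem IsSteiner.eq_zero_of_line_sums {P : Type*} [Fintype P] {mP : P → P → P}
    (hP : IsSteiner mP) (hcard : 4 ≤ Fintype.card P) {d : P → ℤ} (hd : ∑ v, d v = 0)
    (hline : ∀ v w, v ≠ w → d v + d w + d (mP v w) = 0) (v : P) : d v = 0 := by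
  have hbij : Function.Bijective (mP v) := (Function.Involutive.bijective (hP.inv v))
  have hsum : ∑ w, (d v + d w + d (mP v w)) = 3 * d v := by
    rw [sum_eq_single v (fun w _ hw => hline v w hw.symm) (by simp), hP.idem]
    ring
  rw [sum_add_distrib, sum_add_distrib, hbij.sum_comp d, hd, sum_const, card_univ,
    nsmul_eq_mul] at hsum
  have : (4 : ℤ) ≤ Fintype.card P := mod_cast hcard
  exact (mul_eq_zero.1 (show ((Fintype.card P : ℤ) - 3) * d v = 0 by linarith)).resolve_left
    (by linarith)

theorem card_add_self_eq_le {m : ℕ} [NeZero m] (e : ZMod m) :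
    #{b : ZMod m | b + b = e} ≤ 2 := by
  rcases ({b : ZMod m | b + b = e} : Finset _).eq_empty_or_nonempty with h | ⟨b₀, h₀⟩
  · rw [h, card_empty]; exact zero_le
  · rw [mem_filter_univ] at h₀
    refine (card_le_card_of_injOn (· - b₀) (fun b hb => ?_) (sub_left_injective.injOn)).trans
      (IsAddCyclic.card_nsmul_eq_zero_le (α := ZMod m) two_pos)
    rw [mem_coe, mem_filter_univ] at hb ⊢
    rw [two_nsmul, sub_add_sub_comm, hb, h₀, sub_self]

section Envelope

variable {α X P : Type*} [Fintype X] [Fintype P] {m : ℕ} [NeZero m] {TV : Finset (Finset α)}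
  {f : P → ℕ} {φ : α → P} {mX : X → X → X} {σ : X → ZMod m → ZMod m}
  {F : X ⊕ ZMod m → X ⊕ ZMod m → X ⊕ ZMod m} {mP : P → P → P}

theorem exists_colour_perm_of_isOpAut_blowUp (hP : IsSteiner mP) (hF : IsFibreSystem mX σ F)
    (hσ : IsRigidFamily σ) (hδ : ∀ x, ∃ δ, m ≤ 4 * #{s | σ x s = s + δ}) (hf : ∀ v, 3 * f v < m)
    (hX : Fintype.card X ≤ m) (hw : 127 ≤ Fintype.card P) (hm : 2 * Fintype.card P ^ 2 ≤ m)
    {g : Equiv.Perm (X ⊕ P × ZMod m)}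
    (hg : IsOpAut (blowUp mX σ F mP fun v => (f v : ZMod m)) g) :
    ∃ π : Equiv.Perm P, IsOpAut mP π ∧ (∀ v, f (π v) = f v) ∧
      g = Equiv.sumCongr 1 (Equiv.prodCongr π 1) := by
  have : Nontrivial P := Fintype.one_lt_card_iff_nontrivial.1 (by lia)
  have hlt := card_wordPairs_inr_lt_inl (c := fun v => (f v : ZMod m)) hF hP
    (by convert card_add_self_eq_le (m := m)) (by rw [ZMod.card]; convert hδ)
    (by rwa [ZMod.card]) hw (by rwa [ZMod.card])
  have hl : ∀ x, ∃ y, g (Sum.inl x) = Sum.inl y := fun x => by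
    have hx := hg.card_wordPairs_eq (Sum.inl x)
    rcases h : g (Sum.inl x) with y | q
    · exact ⟨y, rfl⟩
    · exact absurd (h ▸ hx) (hlt q x).ne
  have hr : ∀ p, ∃ q, g (Sum.inr p) = Sum.inr q := fun p => by
    have hp := hg.card_wordPairs_eq (Sum.inr p)
    rcases h : g (Sum.inr p) with y | q
    · exact absurd (h ▸ hp) (hlt p y).ne'
    · exact ⟨q, rfl⟩
  obtain ⟨π, hπ, hc, rfl⟩ := exists_perm_of_isOpAut_blowUp hF hP hσ hg hl hr
  refine ⟨π, hπ, fun v => ?_, rfl⟩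
  have hline : ∀ v w, v ≠ w →
      f (π v) + f (π w) + f (π (mP v w)) = f v + f w + f (mP v w) := fun v w hvw => by
    have := hf (π v)
    have := hf (π w)
    have := hf (π (mP v w))
    have := hf v
    have := hf w
    have := hf (mP v w)
    refine Nat.ModEq.eq_of_lt_of_lt ((ZMod.natCast_eq_natCast_iff _ _ m).1 ?_) ?_ ?_
    · push_cast
      exact hc v w hvw
    · lia
    · lia
  have hzero := hP.eq_zero_of_line_sums (by lia) (d := fun v => (f (π v) : ℤ) - f v)
    (by rw [sum_sub_distrib, Equiv.sum_comp π fun v => (f v : ℤ), sub_self])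
    (fun v w hvw => by have := hline v w hvw; lia) v
  lia

theorem isEnvelope_blowUp (hE : IsEnvelope TV mP f φ) (hF : IsFibreSystem mX σ F)
    (hσ : IsRigidFamily σ) (hδ : ∀ x, ∃ δ, m ≤ 4 * #{s | σ x s = s + δ}) (hf : ∀ v, 3 * f v < m)
    (hX : Fintype.card X ≤ m) (hw : 127 ≤ Fintype.card P) (hm : 2 * Fintype.card P ^ 2 ≤ m) :
    IsEnvelope TV (blowUp mX σ F mP fun v => (f v : ZMod m)) 0 fun a => Sum.inr (φ a, 0) := by
  have : Nonempty P := Fintype.card_pos_iff.1 (by lia)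
  have hact := fun g (hg : IsOpAut _ g) =>
    exists_colour_perm_of_isOpAut_blowUp hE.steiner hF hσ hδ hf hX hw hm (g := g) hg
  refine ⟨isSteiner_blowUp hF hE.steiner, fun a b h => ?_, fun a b c hab => ?_, fun _ => rfl,
    fun ρ hρ => ?_, fun g hg _ a => ?_, fun g hg _ hfix => ?_⟩
  · exact hE.inj (congrArg Prod.fst (Sum.inr_injective h))
  · rw [← hE.triple a b c hab, blowUp_of_ne (hE.inj.ne hab), Sum.inr.injEq, Prod.mk.injEq,
      and_iff_left_of_imp]
    intro h
    simp only [h, hE.colour, Nat.cast_zero, add_zero, sub_zero]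
  · obtain ⟨π, hπ, hπf, hπφ⟩ := hE.lift ρ hρ
    refine ⟨_, isOpAut_sumCongr_blowUp hF hπ fun v => by rw [hπf], fun _ => rfl, fun a => ?_⟩
    rw [← hπφ]
    rfl
  · obtain ⟨π, hπ, hπf, rfl⟩ := hact g hg
    obtain ⟨b, hb⟩ := hE.restrict π hπ hπf a
    exact ⟨b, by rw [← hb]; rfl⟩
  · obtain ⟨π, hπ, hπf, rfl⟩ := hact g hg
    obtain rfl := hE.faithful π hπ hπf fun a => congrArg Prod.fst (Sum.inr_injective (hfix a))
    ext (x | ⟨v, a⟩) <;> rfl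

end Envelope

/-! ### Rigidity by relabelling -/

section Relabelling

variable {X A : Type*} {σ : X → A → A}

theorem card_le_card_add_card {f : A → A} (hf : Function.Injective f) {M S T : Finset A}
    (h : ∀ a, a ∉ S → f a ∉ T → a ∉ M) : #M ≤ #S + #T := by
  have hsub : M ⊆ S ∪ T.preimage f hf.injOn := fun a ha => by
    by_contra hST
    simp only [mem_union, mem_preimage, not_or] at hST
    exact h a hST.1 hST.2 ha
  have hpre : #(T.preimage f hf.injOn) ≤ #T :=
    card_le_card_of_injOn f (fun a ha => mem_preimage.1 ha) hf.injOn
  exact (card_le_card hsub).trans ((card_union_le _ _).trans (Nat.add_le_add_left hpre _))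

theorem eq_of_card_ne_lt [Fintype X] [Fintype A] (hσ : ∀ x, Function.Injective (σ x))
    (hX : ∀ x y a, σ x a = σ y a → x = y) {ψ ξ : A → A} {β γ : X → X}
    (hψ : ∀ x a, ψ (σ x a) = σ (β x) (ψ a)) (hξ : ∀ x a, ξ (σ x a) = σ (γ x) (ξ a))
    (hA : 2 * #{a | ψ a ≠ ξ a} < Fintype.card A) (hlt : #{a | ψ a ≠ ξ a} < Fintype.card X) :
    ψ = ξ := by
  set M : Finset A := {a | ψ a ≠ ξ a} with hM
  have hβγ : ∀ x, β x = γ x := fun x => by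
    obtain ⟨a, ha, hxa⟩ : ∃ a, a ∉ M ∧ σ x a ∉ M := by
      by_contra! h
      have := card_le_card_add_card (hσ x) (M := univ) (S := M) (T := M)
        fun a ha hxa => absurd (h a ha) hxa
      rw [card_univ] at this
      lia
    simp only [hM, mem_filter, mem_univ, true_and, not_not] at ha hxa
    exact hX _ _ (ψ a) (by rw [← hψ, hxa, hξ, ha])
  by_contra hne
  obtain ⟨a, ha⟩ := Function.ne_iff.1 hne
  refine hlt.not_ge (card_le_card_of_injOn (s := univ) (fun x => σ x a) (fun x _ => ?_)
    fun x _ y _ => hX x y a)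
  refine mem_coe.2 (mem_filter.2 ⟨mem_univ _, fun h => ha (hσ (β x) ?_)⟩)
  rw [← hψ, h, hξ, hβγ]

theorem map_add_nsmul_of_affine [AddCommGroup A] {θ : A → A}
    (hθ : ∀ a b, θ (a + b) = θ a + θ b - θ 0) (n : ℕ) (a b : A) :
    θ (a + n • b) = θ a + n • (θ b - θ 0) := by
  induction n with
  | zero => simp only [zero_smul, add_zero]
  | succ n ih => rw [succ_nsmul, ← add_assoc, hθ, ih, succ_nsmul, ← add_assoc, add_sub_assoc]

theorem map_add_nsmul_of_card_ne [Fintype X] [Fintype A] [AddCommGroup A]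
    (hσ : ∀ x, Function.Injective (σ x)) (hX : ∀ x y a, σ x a = σ y a → x = y) {n : ℕ}
    (htr : ∀ x a b, σ x (a + n • b) = σ x a + n • b) {θ ψ : A → A}
    (hθ : ∀ a b, θ (a + b) = θ a + θ b - θ 0) {β : X → X}
    (hψ : ∀ x a, ψ (σ x a) = σ (β x) (ψ a)) (hA : 4 * #{a | ψ a ≠ θ a} < Fintype.card A)
    (hlt : 2 * #{a | ψ a ≠ θ a} < Fintype.card X) (b a : A) :
    ψ (a + n • b) = ψ a + n • (θ b - θ 0) := by
  have hM : #{a | ψ a ≠ ψ (a + n • b) - n • (θ b - θ 0)} ≤ 2 * #{a | ψ a ≠ θ a} := by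
    rw [two_mul]
    refine card_le_card_add_card (add_left_injective (n • b)) fun a ha hab => ?_
    simp only [mem_filter, mem_univ, true_and, not_not] at ha hab ⊢
    rw [ha, hab, map_add_nsmul_of_affine hθ, add_sub_cancel_right]
  have h := eq_of_card_ne_lt hσ hX hψ (ξ := fun a => ψ (a + n • b) - n • (θ b - θ 0)) (γ := β)
    (fun x a => by rw [← htr, hψ, sub_eq_iff_eq_add, ← htr, sub_add_cancel]) (by lia) (by lia)
  exact (eq_sub_iff_add_eq.1 (congrFun h a)).symm

theorem eq_affine_of_card_ne [Fintype X] [Fintype A] [AddCommGroup A]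
    (hσ : ∀ x, Function.Injective (σ x)) (hX : ∀ x y a, σ x a = σ y a → x = y) {n : ℕ}
    (htr : ∀ x a b, σ x (a + n • b) = σ x a + n • b) {θ ψ : A → A}
    (hθ : ∀ a b, θ (a + b) = θ a + θ b - θ 0) {β : X → X}
    (hψ : ∀ x a, ψ (σ x a) = σ (β x) (ψ a)) (hA : 4 * #{a | ψ a ≠ θ a} < Fintype.card A)
    (hlt : 2 * #{a | ψ a ≠ θ a} < Fintype.card X) {b : A}
    (hb : #{a | ψ a ≠ θ a} < addOrderOf (n • b)) : ψ = θ := by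
  by_contra hne
  obtain ⟨a, ha⟩ := Function.ne_iff.1 hne
  refine hb.not_ge ?_
  rw [← card_range (addOrderOf (n • b))]
  refine card_le_card_of_injOn (fun k => a + k • n • b) (fun k _ => ?_) fun k hk l hl h => ?_
  · refine mem_coe.2 (mem_filter.2 ⟨mem_univ _, ?_⟩)
    simp only [smul_comm k n b]
    rw [map_add_nsmul_of_card_ne hσ hX htr hθ hψ hA hlt, map_add_nsmul_of_affine hθ]
    exact fun h => ha (add_right_cancel h)
  · exact nsmul_injOn_Iio_addOrderOf (mem_range.1 hk) (mem_range.1 hl) (add_left_cancel h)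

theorem comp_comm_of_conj_affine [Fintype X] [Fintype A] [AddCommGroup A]
    (hσ : ∀ x, Function.Injective (σ x)) (hX : ∀ x y a, σ x a = σ y a → x = y) {n : ℕ}
    (htr : ∀ x a b, σ x (a + n • b) = σ x a + n • b) {τ : Equiv.Perm A} {S : Finset A}
    (hτ : ∀ a ∉ S, τ a = a) (hSA : 8 * #S < Fintype.card A) (hSX : 4 * #S < Fintype.card X) {b : A}
    (hSb : 2 * #S < addOrderOf (n • b)) {θ : A → A} (hθi : Function.Injective θ)
    (hθ : ∀ a b, θ (a + b) = θ a + θ b - θ 0) {β : X → X}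
    (hβ : ∀ x a, θ (τ (σ x (τ.symm a))) = τ (σ (β x) (τ.symm (θ a)))) (a : A) :
    θ (τ a) = τ (θ a) := by
  have hψ : ∀ x a, τ.symm (θ (τ (σ x a))) = σ (β x) (τ.symm (θ (τ a))) := fun x a => by
    have := hβ x (τ a)
    rwa [τ.symm_apply_apply, ← Equiv.symm_apply_eq] at this
  have hD : #{a | τ.symm (θ (τ a)) ≠ θ a} ≤ 2 * #S := by
    rw [two_mul]
    refine card_le_card_add_card hθi fun a ha hθa => ?_
    rw [mem_filter, not_and_not_right, Equiv.symm_apply_eq, hτ a ha, hτ _ hθa]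
    exact fun _ => rfl
  have h := eq_affine_of_card_ne hσ hX htr hθ (ψ := fun a => τ.symm (θ (τ a))) hψ (by lia)
    (by lia) (hD.trans_lt hSb)
  exact (Equiv.symm_apply_eq _).1 (congrFun h a)

theorem IsFibreSystem.relabel {mX : X → X → X} {F : X ⊕ A → X ⊕ A → X ⊕ A}
    (hF : IsFibreSystem mX σ F) (τ : Equiv.Perm A) :
    IsFibreSystem mX (fun x a => τ (σ x (τ.symm a)))
      (renameOp (Equiv.sumCongr (Equiv.refl X) τ) F) where
  steiner := hF.steiner.rename _
  sub x y := congrArg (Equiv.sumCongr (Equiv.refl X) τ) (hF.sub x y)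
  act x a := congrArg (Equiv.sumCongr (Equiv.refl X) τ) (hF.act x (τ.symm a))

theorem card_shift_le_card_shift_relabel [Fintype A] [AddCommGroup A]
    (hσ : ∀ x, Function.Injective (σ x)) {τ : Equiv.Perm A} {S : Finset A}
    (hτ : ∀ a ∉ S, τ a = a) (x : X) (δ : A) :
    #{s | σ x s = s + δ} ≤ #{s | τ (σ x (τ.symm s)) = s + δ} + 2 * #S := by
  have h := card_le_card_add_card (hσ x) (M := {s | σ x s = s + δ})
    (S := ({s | τ (σ x (τ.symm s)) = s + δ} : Finset A) ∪ S) (T := S) fun s hs hxs => by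
      simp only [mem_union, mem_filter, mem_univ, true_and, not_or] at hs ⊢
      have hs' : τ.symm s = s := by rw [Equiv.symm_apply_eq, hτ s hs.2]
      rw [hs', hτ _ hxs] at hs
      exact hs.1
  have := card_union_le ({s | τ (σ x (τ.symm s)) = s + δ} : Finset A) S
  lia

end Relabelling

/-- The cycle `0 ↦ 1 ↦ 3 ↦ 0`. No affine map other than the identity commutes with it. -/
def symmetryBreaker (m : ℕ) : Equiv.Perm (ZMod m) :=
  Equiv.swap 0 1 * Equiv.swap 1 3

section SymmetryBreaker

variable {m : ℕ}

theorem symmetryBreaker_of_notMem {a : ZMod m} (ha : a ∉ ({0, 1, 3} : Finset (ZMod m))) :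
    symmetryBreaker m a = a := by
  simp only [mem_insert, mem_singleton, not_or] at ha
  rw [symmetryBreaker, Equiv.Perm.mul_apply, Equiv.swap_apply_of_ne_of_ne ha.2.1 ha.2.2,
    Equiv.swap_apply_of_ne_of_ne ha.1 ha.2.1]

theorem natCast_zmod_ne_zero {k : ℕ} (hk : 0 < k) (hkm : k < m) : (k : ZMod m) ≠ 0 := fun h =>
  (Nat.le_of_dvd hk ((ZMod.natCast_eq_zero_iff k m).1 h)).not_gt hkm

theorem symmetryBreaker_apply (hm : 8 ≤ m) :
    symmetryBreaker m 0 = 1 ∧ symmetryBreaker m 1 = 3 ∧ symmetryBreaker m 3 = 0 := by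
  have h1 : (1 : ZMod m) ≠ 0 := mod_cast natCast_zmod_ne_zero (m := m) one_pos (by lia)
  have h2 : (2 : ZMod m) ≠ 0 := mod_cast natCast_zmod_ne_zero (m := m) two_pos (by lia)
  have h3 : (3 : ZMod m) ≠ 0 := mod_cast natCast_zmod_ne_zero (m := m) three_pos (by lia)
  have h31 : (3 : ZMod m) ≠ 1 := fun h => h2 (by linear_combination h)
  simp only [symmetryBreaker, Equiv.Perm.mul_apply, Equiv.swap_apply_left,
    Equiv.swap_apply_right, Equiv.swap_apply_of_ne_of_ne h1.symm h3.symm,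
    Equiv.swap_apply_of_ne_of_ne h3 h31, and_self]

theorem eq_id_of_affine_of_fixed [NeZero m] {θ : ZMod m → ZMod m}
    (hθ : ∀ a b, θ (a + b) = θ a + θ b - θ 0) (h₀ : θ 0 = 0) (h₁ : θ 1 = 1) : θ = id := by
  ext a
  have := map_add_nsmul_of_affine hθ a.val 0 1
  rwa [zero_add, h₀, h₁, sub_zero, zero_add, nsmul_one, ZMod.natCast_zmod_val] at this

theorem eq_id_of_affine_of_comm_symmetryBreaker [NeZero m] (hm : 8 ≤ m) {θ : ZMod m → ZMod m}
    (hθi : Function.Injective θ) (hθ : ∀ a b, θ (a + b) = θ a + θ b - θ 0)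
    (hcomm : ∀ a, θ (symmetryBreaker m a) = symmetryBreaker m (θ a)) : θ = id := by
  have h7 : (7 : ZMod m) ≠ 0 := mod_cast natCast_zmod_ne_zero (m := m) (k := 7) (by lia) (by lia)
  obtain ⟨τ0, τ1, τ3⟩ := symmetryBreaker_apply hm
  have h3 : θ 3 = θ 0 + 3 * (θ 1 - θ 0) := by
    have := map_add_nsmul_of_affine hθ 3 0 1
    rw [zero_add, nsmul_one, nsmul_eq_mul] at this
    exact mod_cast this
  have h01 := hcomm 0
  have h13 := hcomm 1
  rw [τ0] at h01
  rw [τ1] at h13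
  have hmem : θ 0 ∈ ({0, 1, 3} : Finset (ZMod m)) := by
    by_contra h
    rw [symmetryBreaker_of_notMem h] at h01
    exact natCast_zmod_ne_zero (m := m) one_pos (by lia) (mod_cast hθi h01)
  simp only [mem_insert, mem_singleton] at hmem
  rcases hmem with h | h | h
  · exact eq_id_of_affine_of_fixed hθ h (by rw [h01, h, τ0])
  · rw [h, τ1] at h01
    rw [h01, τ3, h3, h01, h] at h13
    exact absurd (by linear_combination h13) h7
  · rw [h, τ3] at h01
    rw [h01, τ0, h3, h01, h] at h13
    exact absurd (by linear_combination -h13) h7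

theorem isRigidFamily_relabel [NeZero m] {X : Type*} [Fintype X] {σ : X → ZMod m → ZMod m}
    (hσ : ∀ x, Function.Injective (σ x)) (hX : ∀ x y a, σ x a = σ y a → x = y)
    (hconn : ∀ B : Set (ZMod m), (∀ x, ∀ s ∈ B, σ x s ∈ B) → B.Nonempty → B = Set.univ) {n : ℕ}
    (htr : ∀ x a b, σ x (a + n • b) = σ x a + n • b) (hcard : 13 ≤ Fintype.card X) (hm : 25 ≤ m)
    {b : ZMod m} (hb : 7 ≤ addOrderOf (n • b)) :
    IsRigidFamily fun x a => symmetryBreaker m (σ x ((symmetryBreaker m).symm a)) where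
  connected B hB hne := by
    have h := hconn (symmetryBreaker m ⁻¹' B) (fun x s hs => by
      simpa only [Set.mem_preimage, Equiv.symm_apply_apply] using hB x _ hs)
      (hne.preimage (symmetryBreaker m).surjective)
    rwa [Set.preimage_eq_univ_iff, (symmetryBreaker m).surjective.range_eq,
      Set.univ_subset_iff] at h
  eq_id θ hθi hθ β hβ := by
    have hS : #({0, 1, 3} : Finset (ZMod m)) ≤ 3 := card_le_three
    refine eq_id_of_affine_of_comm_symmetryBreaker (by lia) hθi hθ fun a =>
      comp_comm_of_conj_affine hσ hX htr (fun a => symmetryBreaker_of_notMem) ?_ ?_ (b := b) ?_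
        hθi hθ hβ a
    · rw [ZMod.card]; lia
    · lia
    · lia

end SymmetryBreaker

/-! ### Fibre systems with prescribed differences -/

/-- The operation on `X ⊕ A` in which `X` forms the system `mX` and acts by the involutions `σ x`,
and the translates of `{0, e, g e}` are the triples for the differences `e` not realised by `σ`. -/
def fibreOp {X A : Type*} [AddCommGroup A] (mX : X → X → X) (σ : X → A → A) (g : A → A) :
    X ⊕ A → X ⊕ A → X ⊕ A
  | Sum.inl x, Sum.inl y => Sum.inl (mX x y)
  | Sum.inl x, Sum.inr a => Sum.inr (σ x a)
  | Sum.inr a, Sum.inl x => Sum.inr (σ x a)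
  | Sum.inr a, Sum.inr b =>
    if a = b then Sum.inr a
    else if h : ∃ x, σ x a = b then Sum.inl h.choose else Sum.inr (a + g (b - a))

section FibreOp

variable {X A : Type*} [AddCommGroup A] {mX : X → X → X} {σ : X → A → A} {g : A → A}

theorem fibreOp_inr_self (a : A) : fibreOp mX σ g (Sum.inr a) (Sum.inr a) = Sum.inr a :=
  if_pos rfl

theorem fibreOp_inr_of_act (hX : ∀ x y a, σ x a = σ y a → x = y) (hne : ∀ x a, σ x a ≠ a) (x : X)
    (a : A) : fibreOp mX σ g (Sum.inr a) (Sum.inr (σ x a)) = Sum.inl x := by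
  have h : ∃ y, σ y a = σ x a := ⟨x, rfl⟩
  rw [fibreOp, if_neg (hne x a).symm, dif_pos h, hX _ _ a h.choose_spec]

theorem fibreOp_inr_of_free {E : Set A} (hE : ∀ a e, e ∈ E ↔ e ≠ 0 ∧ ∀ x, σ x a ≠ a + e) {e : A}
    (he : e ∈ E) (a : A) :
    fibreOp mX σ g (Sum.inr a) (Sum.inr (a + e)) = Sum.inr (a + g e) := by
  obtain ⟨he0, hex⟩ := (hE a e).1 he
  rw [fibreOp, if_neg (by rwa [left_eq_add]), dif_neg (by simpa only [not_exists] using hex),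
    add_sub_cancel_left]

theorem isFibreSystem_fibreOp (hmX : IsSteiner mX) (hσ : ∀ x a, σ x (σ x a) = a)
    (hX : ∀ x y a, σ x a = σ y a → x = y) (hne : ∀ x a, σ x a ≠ a) {E : Set A}
    (hE : ∀ a e, e ∈ E ↔ e ≠ 0 ∧ ∀ x, σ x a ≠ a + e) (hneg : ∀ e ∈ E, -e ∈ E)
    (hgE : ∀ e ∈ E, g e ∈ E) (hgg : ∀ e ∈ E, g (g e) = e) (hg_neg : ∀ e ∈ E, g (-e) = g e - e) :
    IsFibreSystem mX σ (fibreOp mX σ g) := by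
  have cases_inr : ∀ a b, a = b ∨ (∃ x, b = σ x a) ∨ ∃ e ∈ E, b = a + e := fun a b => by
    by_cases h : b - a ∈ E
    · exact .inr (.inr ⟨_, h, (add_sub_cancel a b).symm⟩)
    · rw [hE a, add_sub_cancel, sub_ne_zero, not_and_or, not_not] at h
      refine h.imp Eq.symm fun h => .inl ?_
      push Not at h
      exact h.imp fun x => Eq.symm
  refine ⟨⟨?_, ?_, ?_⟩, fun _ _ => rfl, fun _ _ => rfl⟩
  · rintro (x | a)
    · exact congrArg Sum.inl (hmX.idem x)
    · exact fibreOp_inr_self a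
  · rintro (x | a) (y | b)
    · exact congrArg Sum.inl (hmX.comm x y)
    · rfl
    · rfl
    · obtain rfl | ⟨x, rfl⟩ | ⟨e, he, rfl⟩ := cases_inr a b
      · rfl
      · have h := fibreOp_inr_of_act (mX := mX) (g := g) hX hne x (σ x a)
        rw [hσ] at h
        rw [fibreOp_inr_of_act hX hne, h]
      · have h := fibreOp_inr_of_free (mX := mX) (g := g) hE (hneg e he) (a + e)
        rw [add_neg_cancel_right] at h
        rw [fibreOp_inr_of_free hE he, h, hg_neg e he, add_add_sub_cancel]
  · rintro (x | a) (y | b)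
    · exact congrArg Sum.inl (hmX.inv x y)
    · exact congrArg Sum.inr (hσ x b)
    · exact fibreOp_inr_of_act hX hne y a
    · obtain rfl | ⟨x, rfl⟩ | ⟨e, he, rfl⟩ := cases_inr a b
      · rw [fibreOp_inr_self, fibreOp_inr_self]
      · rw [fibreOp_inr_of_act hX hne]; rfl
      · rw [fibreOp_inr_of_free hE he, fibreOp_inr_of_free hE (hgE e he), hgg e he]

end FibreOp

/-- Steps `d l` and an element `h` of order two, together with colourings `χ l` of the group by two
colours for which translation by `d l` swaps the colours. -/
structure IsShiftSystem {L A : Type*} [AddCommGroup A] (d : L → A) (h : A)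
    (χ : L → A → Bool) : Prop where
  half_add_half : h + h = 0
  half_ne : h ≠ 0
  step_ne : ∀ l, d l ≠ -d l
  step_inj : ∀ l l', d l = d l' ∨ d l = -d l' → l = l'
  flip : ∀ l a, χ l (a + d l) = !χ l a

/-- The amount by which the involution with index `x` moves the point `a`. -/
def shiftAmount {L A : Type*} [AddCommGroup A] (d : L → A) (h : A) (χ : L → A → Bool) :
    Option (L × Bool) → A → A
  | none, _ => h
  | some (l, b), a => if χ l a = b then d l else -d l

/-- The involutions of a shift system: one moves all points by `h`, and for each `l` the edges
`{a, a + d l}` of the circulant graph form the orbits of two of them. -/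
def shiftInvol {L A : Type*} [AddCommGroup A] (d : L → A) (h : A) (χ : L → A → Bool)
    (x : Option (L × Bool)) (a : A) : A :=
  a + shiftAmount d h χ x a

/-- The elements by which no involution of a shift system moves a point. -/
def freeDifferences {L A : Type*} [AddCommGroup A] (d : L → A) (h : A) : Set A :=
  {e | e ≠ 0 ∧ e ≠ h ∧ ∀ l, e ≠ d l ∧ e ≠ -d l}

namespace IsShiftSystem

variable {L A : Type*} [AddCommGroup A] {d : L → A} {h : A} {χ : L → A → Bool}

theorem neg_half (hS : IsShiftSystem d h χ) : -h = h := neg_eq_of_add_eq_zero_left hS.half_add_half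

theorem flip_neg (hS : IsShiftSystem d h χ) (l : L) (a : A) : χ l (a + -d l) = !χ l a := by
  rw [← Bool.not_not (χ l (a + -d l)), ← hS.flip, neg_add_cancel_right]

theorem shiftAmount_some (l : L) (b : Bool) (a : A) :
    shiftAmount d h χ (some (l, b)) a = if χ l a = b then d l else -d l := rfl

theorem exists_shiftAmount_eq_iff {a e : A} :
    (∃ x, shiftAmount d h χ x a = e) ↔ e = h ∨ ∃ l, e = d l ∨ e = -d l := by
  constructor
  · rintro ⟨_ | ⟨l, b⟩, rfl⟩
    · exact .inl rfl
    · refine .inr ⟨l, ?_⟩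
      rw [shiftAmount_some]
      split_ifs
      exacts [.inl rfl, .inr rfl]
  · rintro (rfl | ⟨l, rfl | rfl⟩)
    · exact ⟨none, rfl⟩
    · exact ⟨some (l, χ l a), if_pos rfl⟩
    · exact ⟨some (l, !χ l a), if_neg (by simp)⟩

theorem mem_freeDifferences_iff (a e : A) :
    e ∈ freeDifferences d h ↔ e ≠ 0 ∧ ∀ x, shiftInvol d h χ x a ≠ a + e := by
  have : (∀ x, shiftInvol d h χ x a ≠ a + e) ↔ ¬∃ x, shiftAmount d h χ x a = e := by
    simp only [shiftInvol, ne_eq, add_right_inj, not_exists]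
  rw [this, exists_shiftAmount_eq_iff]
  simp only [freeDifferences, Set.mem_ofPred_eq, not_or, not_exists, ne_eq]

theorem neg_mem_freeDifferences (hS : IsShiftSystem d h χ) {e : A} (he : e ∈ freeDifferences d h) :
    -e ∈ freeDifferences d h := by
  obtain ⟨h0, hh, hl⟩ := he
  refine ⟨neg_ne_zero.2 h0, fun h => hh ?_, fun l => ⟨fun h => (hl l).2 ?_, fun h => (hl l).1 ?_⟩⟩
  · rw [← neg_neg e, h, hS.neg_half]
  · rw [← h, neg_neg]
  · exact neg_injective h

theorem shiftAmount_ne_zero (hS : IsShiftSystem d h χ) (x : Option (L × Bool)) (a : A) :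
    shiftAmount d h χ x a ≠ 0 := by
  have hd : ∀ l, d l ≠ 0 := fun l h => hS.step_ne l (by rw [h, neg_zero])
  rcases x with _ | ⟨l, b⟩
  · exact hS.half_ne
  · rw [shiftAmount_some]
    split_ifs
    exacts [hd l, neg_ne_zero.2 (hd l)]

theorem shiftInvol_shiftInvol (hS : IsShiftSystem d h χ) (x : Option (L × Bool)) (a : A) :
    shiftInvol d h χ x (shiftInvol d h χ x a) = a := by
  rcases x with _ | ⟨l, b⟩
  · simp only [shiftInvol, shiftAmount, add_assoc, hS.half_add_half, add_zero]
  · by_cases hab : χ l a = b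
    · have hne : χ l (a + d l) ≠ b := by rw [hS.flip, hab]; exact Bool.not_ne_self b
      rw [shiftInvol, shiftInvol, shiftAmount_some l b a, if_pos hab, shiftAmount_some,
        if_neg hne, add_neg_cancel_right]
    · have heq : χ l (a + -d l) = b := by rwa [hS.flip_neg, Bool.not_eq_eq_eq_not, Bool.eq_not]
      rw [shiftInvol, shiftInvol, shiftAmount_some l b a, if_neg hab, shiftAmount_some,
        if_pos heq, neg_add_cancel_right]

theorem shiftInvol_left_injective (hS : IsShiftSystem d h χ) (x y : Option (L × Bool)) (a : A)
    (hxy : shiftInvol d h χ x a = shiftInvol d h χ y a) : x = y := by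
  have hdh : ∀ l b, shiftAmount d h χ (some (l, b)) a ≠ h := fun l b hl => by
    rw [shiftAmount_some] at hl
    split_ifs at hl
    · exact hS.step_ne l (by rw [hl, hS.neg_half])
    · exact hS.step_ne l (by rw [← neg_neg (d l), hl, hS.neg_half, hS.neg_half])
  have h := add_left_cancel hxy
  rcases x with _ | ⟨l, b⟩ <;> rcases y with _ | ⟨l', b'⟩
  · rfl
  · exact absurd h.symm (hdh l' b')
  · exact absurd h (hdh l b)
  · have hl : l = l' := by
      rw [shiftAmount_some, shiftAmount_some] at h
      split_ifs at h
      · exact hS.step_inj l l' (.inl h)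
      · exact hS.step_inj l l' (.inr h)
      · exact hS.step_inj l l' (.inr (by rw [← h, neg_neg]))
      · exact hS.step_inj l l' (.inl (neg_injective h))
    subst hl
    have hb : χ l a = b ↔ χ l a = b' := by
      by_contra hb
      rw [shiftAmount_some, shiftAmount_some] at h
      split_ifs at h with h₁ h₂ h₂
      · exact hb (iff_of_true h₁ h₂)
      · exact hS.step_ne l h
      · exact hS.step_ne l h.symm
      · exact hb (iff_of_false h₁ h₂)
    rw [show b = b' by revert hb; cases χ l a <;> cases b <;> cases b' <;> simp]

theorem isFibreSystem (hS : IsShiftSystem d h χ)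
    {mX : Option (L × Bool) → Option (L × Bool) → Option (L × Bool)} (hmX : IsSteiner mX)
    {g : A → A} (hgE : ∀ e ∈ freeDifferences d h, g e ∈ freeDifferences d h)
    (hgg : ∀ e ∈ freeDifferences d h, g (g e) = e)
    (hg_neg : ∀ e ∈ freeDifferences d h, g (-e) = g e - e) :
    IsFibreSystem mX (shiftInvol d h χ) (fibreOp mX (shiftInvol d h χ) g) :=
  isFibreSystem_fibreOp hmX hS.shiftInvol_shiftInvol hS.shiftInvol_left_injective
    (fun x a => by rw [shiftInvol, Ne, add_eq_left]; exact hS.shiftAmount_ne_zero x a)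
    mem_freeDifferences_iff (fun _ => hS.neg_mem_freeDifferences) hgE hgg hg_neg

theorem add_mem_of_forall_shiftInvol_mem {B : Set A}
    (hB : ∀ x, ∀ a ∈ B, shiftInvol d h χ x a ∈ B) (l : L) {a : A} (ha : a ∈ B) : a + d l ∈ B := by
  have h := hB (some (l, χ l a)) a ha
  rwa [shiftInvol, shiftAmount_some, if_pos rfl] at h

theorem shiftInvol_add {t : A} (ht : ∀ l a, χ l (a + t) = χ l a) (x : Option (L × Bool)) (a : A) :
    shiftInvol d h χ x (a + t) = shiftInvol d h χ x a + t := by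
  rcases x with _ | ⟨l, b⟩
  · exact add_right_comm a t h
  · simp only [shiftInvol, shiftAmount, ht, add_right_comm a t]

theorem exists_card_shift_le [Fintype A] (hS : IsShiftSystem d h χ) (x : Option (L × Bool)) :
    ∃ δ, Fintype.card A ≤ 2 * #{a | shiftInvol d h χ x a = a + δ} := by
  rcases x with _ | ⟨l, b⟩
  · refine ⟨h, ?_⟩
    have : ({a | shiftInvol d h χ none a = a + h} : Finset A) = univ :=
      filter_true_of_mem fun a _ => rfl
    rw [this, card_univ]
    lia
  · refine ⟨d l, ?_⟩
    have hsub : #{a | χ l a = b} ≤ #{a | shiftInvol d h χ (some (l, b)) a = a + d l} :=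
      card_le_card fun a ha => by
        rw [mem_filter_univ] at ha ⊢
        rw [shiftInvol, shiftAmount_some, if_pos ha]
    have hle : #{a | ¬χ l a = b} ≤ #{a | χ l a = b} :=
      card_le_card_of_injOn (· + d l) (fun a ha => by
        rw [mem_coe, mem_filter_univ] at ha ⊢
        rw [hS.flip, Bool.not_eq.2 ha]) (add_left_injective _).injOn
    have hsum := card_filter_add_card_filter_not (s := (univ : Finset A)) fun a => χ l a = b
    rw [card_univ] at hsum
    lia

end IsShiftSystem

/-! ### A rigid fibre system on the integers modulo `48 * p + 28` -/

/-- The sizes of the steps. The differences of absolute value below `24 * p + 14`, other than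
`20 * p + 11`, fall into triples `{e, (24 * p + 13 - e) / 2, (24 * p + 13 + e) / 2}` for odd
`e ≤ 8 * p + 3` and `{e, (40 * p + 22 - e) / 2, (40 * p + 22 + e) / 2}` for even `e ≤ 8 * p + 4`;
the members of `j` triples of the first kind become steps. -/
def stepSize (p : ℕ) {j : ℕ} : Option (Fin j × Fin 3) → ℤ
  | none => 20 * p + 11
  | some (i, 0) => 8 * (i : ℕ) + 1
  | some (i, 1) => 12 * p + 6 - 4 * (i : ℕ)
  | some (i, 2) => 12 * p + 7 + 4 * (i : ℕ)

/-- The index set of the involutions: one for the half step and two for each step. -/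
abbrev InvolIndex (j : ℕ) : Type := Option (Option (Fin j × Fin 3) × Bool)

theorem card_involIndex (j : ℕ) : Fintype.card (InvolIndex j) = 3 * (2 * j + 1) := by
  simp only [Fintype.card_option, Fintype.card_prod, Fintype.card_fin, Fintype.card_bool]
  lia

/-- `e` is not the size of a step, expressed by congruences and inequalities. -/
def IsNonStep (p j : ℕ) (e : ℤ) : Prop :=
  e ≠ 20 * p + 11 ∧ ¬ (e % 8 = 1 ∧ 0 < e ∧ e < 8 * j) ∧
    ¬ ((12 * p + 6 - e) % 4 = 0 ∧ 0 ≤ 12 * p + 6 - e ∧ 12 * p + 6 - e < 4 * j) ∧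
    ¬ ((e - 12 * p - 7) % 4 = 0 ∧ 0 ≤ e - 12 * p - 7 ∧ e - 12 * p - 7 < 4 * j)

/-- `e` is the least absolute residue of a difference that is neither a step nor the half step. -/
def IsFreeResidue (p j : ℕ) (e : ℤ) : Prop :=
  e ≠ 0 ∧ -(24 * p + 14) < e ∧ e < 24 * p + 14 ∧ IsNonStep p j e ∧ IsNonStep p j (-e)

/-- For a member `e` of a triple described at `stepSize`, or its negative, the number such that
`{0, e, thirdPoint p e}` is the translate of a triple inside the fibre. -/
def thirdPoint (p : ℕ) (e : ℤ) : ℤ :=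
  if -(8 * p + 4) ≤ e ∧ e ≤ 8 * p + 4 then
    if e % 2 = 1 then (24 * p + 13 + e) / 2 else (40 * p + 22 + e) / 2
  else if 0 < e then
    if e ≤ 16 * p + 8 then 2 * e - (24 * p + 13) else 2 * e - (40 * p + 22)
  else if -e ≤ 16 * p + 8 then -e - (24 * p + 13) else -e - (40 * p + 22)

/-- A colouring of `ZMod 4` by two colours for which translation by `e ≠ 0` swaps the colours. -/
def residueColour (e r : ZMod 4) : Bool :=
  if e = 2 then decide (r = 0) || decide (r = 1) else decide (r = 0) || decide (r = 2)

theorem residueColour_add :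
    ∀ e r : ZMod 4, e ≠ 0 → residueColour e (r + e) = !residueColour e r := by
  decide

section StepSize

variable {p j : ℕ}

theorem isNonStep_iff {e : ℤ} :
    IsNonStep p j e ↔ ∀ l : Option (Fin j × Fin 3), e ≠ stepSize p l := by
  constructor
  · rintro ⟨h1, h2, h3, h4⟩ (_ | ⟨i, k⟩)
    · exact h1
    · have hi := i.2
      fin_cases k <;> simp only [stepSize] <;> lia
  · intro h
    refine ⟨h none, fun h2 => ?_, fun h3 => ?_, fun h4 => ?_⟩
    · have := h (some (⟨(e / 8).toNat, by lia⟩, 0))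
      simp only [stepSize] at this
      lia
    · have := h (some (⟨((12 * p + 6 - e) / 4).toNat, by lia⟩, 1))
      simp only [stepSize] at this
      lia
    · have := h (some (⟨((e - 12 * p - 7) / 4).toNat, by lia⟩, 2))
      simp only [stepSize] at this
      lia

theorem stepSize_mem_Ioo (hj : j ≤ p) (l : Option (Fin j × Fin 3)) :
    stepSize p l ∈ Set.Ioo (0 : ℤ) (24 * p + 14) := by
  rcases l with _ | ⟨i, k⟩
  · constructor <;> simp only [stepSize] <;> lia
  · have hi := i.2
    fin_cases k <;> constructor <;> simp only [stepSize] <;> lia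

theorem stepSize_mod_four (l : Option (Fin j × Fin 3)) : stepSize p l % 4 ≠ 0 := by
  rcases l with _ | ⟨i, k⟩
  · simp only [stepSize]; lia
  · fin_cases k <;> simp only [stepSize] <;> lia

theorem stepSize_injective (hj : j ≤ p) :
    Function.Injective (stepSize p : Option (Fin j × Fin 3) → ℤ) := by
  rintro (_ | ⟨i, k⟩) (_ | ⟨i', k'⟩) h
  · rfl
  · have hi := i'.2
    fin_cases k' <;> simp only [stepSize] at h <;> lia
  · have hi := i.2
    fin_cases k <;> simp only [stepSize] at h <;> lia
  · have := i.2
    have := i'.2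
    fin_cases k <;> fin_cases k' <;> simp only [stepSize] at h <;> first | lia | skip
    all_goals
      have : i = i' := Fin.ext (by lia)
      rw [this]

theorem IsFreeResidue.thirdPoint (hj : j ≤ p) {e : ℤ} (h : IsFreeResidue p j e) :
    IsFreeResidue p j (thirdPoint p e) := by
  unfold IsFreeResidue IsNonStep at *
  unfold _root_.thirdPoint
  split_ifs <;> omega

theorem thirdPoint_thirdPoint {e : ℤ} (h : IsFreeResidue p j e) :
    thirdPoint p (thirdPoint p e) = e := by
  obtain ⟨_, _, _, ⟨_, -⟩, _, -⟩ := h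
  unfold thirdPoint
  split_ifs <;> omega

theorem thirdPoint_neg {e : ℤ} (h : IsFreeResidue p j e) :
    thirdPoint p (-e) = thirdPoint p e - e := by
  obtain ⟨_, _, _, ⟨_, -⟩, _, -⟩ := h
  unfold thirdPoint
  split_ifs <;> omega

theorem eq_intCast_iff_valMinAbs_eq (e : ZMod (48 * p + 28)) {a : ℤ} (ha : -(24 * p + 14) < a)
    (ha' : a ≤ 24 * p + 14) : e = a ↔ e.valMinAbs = a := by
  rw [ZMod.valMinAbs_spec, and_iff_left]
  constructor <;> push_cast <;> lia

theorem intCast_eq_intCast_iff_of_mem {a b : ℤ} (ha : -(24 * p + 14) < a) (ha' : a ≤ 24 * p + 14)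
    (hb : -(24 * p + 14) < b) (hb' : b ≤ 24 * p + 14) :
    (a : ZMod (48 * p + 28)) = b ↔ a = b := by
  rw [eq_intCast_iff_valMinAbs_eq _ hb hb', (eq_intCast_iff_valMinAbs_eq _ ha ha').1 rfl]

end StepSize

section ShiftSystem

variable (p : ℕ) {j : ℕ}

/-- The steps as elements of the cyclic group. -/
def cyclicStep (l : Option (Fin j × Fin 3)) : ZMod (48 * p + 28) := (stepSize p l : ℤ)

/-- The element of order two. -/
def cyclicHalf : ZMod (48 * p + 28) := ((24 * p + 14 : ℤ) : ZMod (48 * p + 28))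

/-- The reduction of the cyclic group modulo four. -/
def modFour : ZMod (48 * p + 28) →+* ZMod 4 := ZMod.castHom (by lia) (ZMod 4)

/-- The colourings by residues modulo four belonging to the steps. -/
def cyclicColour (l : Option (Fin j × Fin 3)) (s : ZMod (48 * p + 28)) : Bool :=
  residueColour (stepSize p l : ℤ) (modFour p s)

/-- `thirdPoint` on the cyclic group. -/
def cyclicThird (e : ZMod (48 * p + 28)) : ZMod (48 * p + 28) := (thirdPoint p e.valMinAbs : ℤ)

variable {p}

theorem isShiftSystem_cyclic (hj : j ≤ p) :
    IsShiftSystem (cyclicStep p : Option (Fin j × Fin 3) → _) (cyclicHalf p) (cyclicColour p) where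
  half_add_half := by
    rw [cyclicHalf, ← Int.cast_add, ZMod.intCast_zmod_eq_zero_iff_dvd]
    exact ⟨1, by push_cast; ring⟩
  half_ne := by
    rw [cyclicHalf, ← Int.cast_zero, Ne, intCast_eq_intCast_iff_of_mem] <;> lia
  step_ne l := by
    obtain ⟨h0, h1⟩ := stepSize_mem_Ioo hj l
    rw [cyclicStep, ← Int.cast_neg, Ne, intCast_eq_intCast_iff_of_mem] <;> lia
  step_inj l l' h := by
    obtain ⟨h0, h1⟩ := stepSize_mem_Ioo hj l
    obtain ⟨h0', h1'⟩ := stepSize_mem_Ioo hj l'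
    rw [cyclicStep, cyclicStep, ← Int.cast_neg, intCast_eq_intCast_iff_of_mem,
      intCast_eq_intCast_iff_of_mem] at h
    · exact stepSize_injective hj (h.resolve_right (by lia))
    all_goals lia
  flip l a := by
    rw [cyclicColour, cyclicStep, map_add, map_intCast, residueColour_add, cyclicColour]
    rw [Ne, ZMod.intCast_zmod_eq_zero_iff_dvd]
    exact fun h => stepSize_mod_four l (Int.emod_eq_zero_of_dvd (mod_cast h))

theorem mem_freeDifferences_cyclic (hj : j ≤ p) (e : ZMod (48 * p + 28)) :
    e ∈ freeDifferences (cyclicStep p : Option (Fin j × Fin 3) → _) (cyclicHalf p) ↔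
      IsFreeResidue p j e.valMinAbs := by
  obtain ⟨hlo, hhi⟩ := e.valMinAbs_mem_Ioc
  have hstep : (∀ l : Option (Fin j × Fin 3), e ≠ cyclicStep p l ∧ e ≠ -cyclicStep p l) ↔
      IsNonStep p j e.valMinAbs ∧ IsNonStep p j (-e.valMinAbs) := by
    rw [isNonStep_iff, isNonStep_iff, ← forall_and]
    refine forall_congr' fun l => ?_
    obtain ⟨h0, h1⟩ := stepSize_mem_Ioo hj l
    rw [cyclicStep, ← Int.cast_neg, Ne, Ne, eq_intCast_iff_valMinAbs_eq,
      eq_intCast_iff_valMinAbs_eq] <;> lia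
  rw [freeDifferences, Set.mem_ofPred_eq, hstep, IsFreeResidue, Ne, Ne, Ne, ZMod.valMinAbs_eq_zero,
    cyclicHalf, eq_intCast_iff_valMinAbs_eq] <;> push_cast at hlo hhi
  · refine and_congr_right fun _ => ⟨fun h => ⟨?_, ?_, h.2⟩, fun h => ⟨?_, h.2.2⟩⟩ <;> lia
  all_goals lia

theorem valMinAbs_cyclicThird (hj : j ≤ p) {e : ZMod (48 * p + 28)}
    (he : IsFreeResidue p j e.valMinAbs) :
    (cyclicThird p e).valMinAbs = thirdPoint p e.valMinAbs := by
  obtain ⟨_, _, _, -⟩ := he.thirdPoint hj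
  exact (eq_intCast_iff_valMinAbs_eq _ (by lia) (by lia)).1 rfl

theorem isFibreSystem_cyclic (hj : j ≤ p)
    {mX : InvolIndex j → InvolIndex j → InvolIndex j} (hmX : IsSteiner mX) :
    IsFibreSystem mX (shiftInvol (cyclicStep p) (cyclicHalf p) (cyclicColour p))
      (fibreOp mX (shiftInvol (cyclicStep p) (cyclicHalf p) (cyclicColour p)) (cyclicThird p)) := by
  refine (isShiftSystem_cyclic hj).isFibreSystem hmX (fun e he => ?_) (fun e he => ?_)
    (fun e he => ?_) <;> rw [mem_freeDifferences_cyclic hj] at he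
  · rw [mem_freeDifferences_cyclic hj, valMinAbs_cyclicThird hj he]
    exact he.thirdPoint hj
  · rw [cyclicThird, valMinAbs_cyclicThird hj he, thirdPoint_thirdPoint he, ZMod.coe_valMinAbs]
  · have hneg : (-e).valMinAbs = -e.valMinAbs := by
      obtain ⟨_, _, _, -⟩ := he
      rw [← eq_intCast_iff_valMinAbs_eq _ (by lia) (by lia), Int.cast_neg, ZMod.coe_valMinAbs]
    rw [cyclicThird, hneg, thirdPoint_neg he, Int.cast_sub, ZMod.coe_valMinAbs, cyclicThird]

theorem cyclicColour_add_four_nsmul (l : Option (Fin j × Fin 3)) (a b : ZMod (48 * p + 28)) :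
    cyclicColour p l (a + 4 • b) = cyclicColour p l a := by
  have h4 : (4 : ZMod 4) = 0 := rfl
  rw [cyclicColour, cyclicColour, map_add, map_nsmul, nsmul_eq_mul, Nat.cast_ofNat, h4, zero_mul,
    add_zero]

theorem eq_univ_of_forall_shiftInvol_mem (hj : 0 < j) {B : Set (ZMod (48 * p + 28))}
    (hB : ∀ x : InvolIndex j, ∀ s ∈ B,
      shiftInvol (cyclicStep p) (cyclicHalf p) (cyclicColour p) x s ∈ B) (hne : B.Nonempty) :
    B = Set.univ := by
  obtain ⟨b, hb⟩ := hne
  have h1 : cyclicStep p (some ((⟨0, hj⟩ : Fin j), (0 : Fin 3))) = 1 := by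
    simp [cyclicStep, stepSize]
  have hmem : ∀ k : ℕ, b + k ∈ B := fun k => by
    induction k with
    | zero => rwa [Nat.cast_zero, add_zero]
    | succ k ih =>
      rw [Nat.cast_succ, ← add_assoc, ← h1]
      exact IsShiftSystem.add_mem_of_forall_shiftInvol_mem hB _ ih
  refine Set.eq_univ_of_forall fun a => ?_
  rw [← add_sub_cancel b a, ← ZMod.natCast_zmod_val (a - b)]
  exact hmem _

theorem exists_rigid_fibreSystem (hj₂ : 2 ≤ j) (hj : j ≤ p) :
    ∃ mX σ F, IsFibreSystem (X := InvolIndex j)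
      (A := ZMod (48 * p + 28)) mX σ F ∧ IsRigidFamily σ ∧
        ∀ x, ∃ δ, 48 * p + 28 ≤ 4 * #{s | σ x s = s + δ} := by
  obtain ⟨mX, hmX⟩ := exists_isSteiner_of_card (card_involIndex j)
  have hS := isShiftSystem_cyclic hj
  have hinj : ∀ x, Function.Injective
      (shiftInvol (cyclicStep p) (cyclicHalf p) (cyclicColour p (j := j)) x) := fun x =>
    Function.Involutive.injective (hS.shiftInvol_shiftInvol x)
  have h4 : addOrderOf (4 • 1 : ZMod (48 * p + 28)) = 12 * p + 7 := by
    rw [nsmul_one, ZMod.addOrderOf_coe _ (by lia),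
      Nat.gcd_eq_right (show 4 ∣ 48 * p + 28 by lia)]
    lia
  refine ⟨mX, _, _, (isFibreSystem_cyclic hj hmX).relabel (symmetryBreaker _),
    isRigidFamily_relabel (n := 4) hinj hS.shiftInvol_left_injective
      (fun B => eq_univ_of_forall_shiftInvol_mem (by lia))
      (fun x a b => IsShiftSystem.shiftInvol_add
        (fun l a => cyclicColour_add_four_nsmul l a b) x a)
      (by have := card_involIndex j; lia) (by lia) (b := 1) (by lia), fun x => ?_⟩
  obtain ⟨δ, hδ⟩ := hS.exists_card_shift_le x
  refine ⟨δ, ?_⟩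
  have h := card_shift_le_card_shift_relabel hinj
    (fun a => symmetryBreaker_of_notMem (a := a)) x δ
  have h3 : #({0, 1, 3} : Finset (ZMod (48 * p + 28))) ≤ 3 := card_le_three
  rw [ZMod.card] at hδ
  lia

end ShiftSystem

/-! ### Orders of the envelopes -/

theorem exists_order_decomposition {w u B : ℕ} (hw : w % 2 = 1)
    (hu : 15 + w * (48 * B + 28) ≤ u) (hmod : u % 6 = w % 6) :
    ∃ p j, B ≤ p ∧ 2 ≤ j ∧ j < 8 * w + 2 ∧ 3 * (2 * j + 1) + w * (48 * p + 28) = u := by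
  obtain ⟨t, ht⟩ := Nat.exists_eq_add_of_le hu
  have h6 : t % 6 = 0 := by
    have : w * (48 * B + 28) = 48 * (w * B) + 28 * w := by ring
    lia
  refine ⟨B + t / (48 * w), t % (48 * w) / 6 + 2, by lia, by lia, ?_, ?_⟩
  · have := Nat.mod_lt t (show 0 < 48 * w by lia)
    lia
  · have hdiv : 6 * (t % (48 * w) / 6) = t % (48 * w) :=
      Nat.mul_div_cancel' ((Nat.dvd_mod_iff ⟨8 * w, by ring⟩).2 (Nat.dvd_of_mod_eq_zero h6))
    calc 3 * (2 * (t % (48 * w) / 6 + 2) + 1) + w * (48 * (B + t / (48 * w)) + 28)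
        = 15 + w * (48 * B + 28) + (48 * w * (t / (48 * w)) + 6 * (t % (48 * w) / 6)) := by ring
      _ = u := by rw [hdiv, Nat.div_add_mod, ht]

theorem exists_bound_of_isEnvelope {α P : Type*} [Fintype α] [Fintype P] {TV : Finset (Finset α)}
    {mP : P → P → P} {f : P → ℕ} {φ : α → P} (hE : IsEnvelope TV mP f φ) (hV : IsPSTS TV)
    (hw : 127 ≤ Fintype.card P) (hodd : Fintype.card P % 2 = 1) :
    ∃ N : ℕ, ∀ u, N ≤ u → u % 6 = Fintype.card P % 6 →
      ∃ T : Finset (Finset (Fin u)), IsSTS T ∧ ∃ ψ : α → Fin u, FullEmbedding TV T ψ := by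
  set w := Fintype.card P
  refine ⟨15 + w * (48 * (w ^ 2 + 8 * w + 2 + ∑ v, f v) + 28), fun u hu hmod => ?_⟩
  obtain ⟨p, j, hp, hj₂, hj, rfl⟩ := exists_order_decomposition hodd hu hmod
  obtain ⟨mX, σ, F, hF, hσ, hδ⟩ := exists_rigid_fibreSystem (p := p) hj₂ (by lia)
  refine (isEnvelope_blowUp hE hF hσ hδ (fun v => ?_) ?_ hw ?_).exists_fin hV ?_
  · have := single_le_sum (fun v _ => Nat.zero_le (f v)) (mem_univ v)
    lia
  · rw [card_involIndex]; lia
  · lia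
  · rw [Fintype.card_sum, Fintype.card_prod, ZMod.card, card_involIndex]

theorem exists_bound_of_mod_six {α : Type*} [Fintype α] {TV : Finset (Finset α)} (hV : IsPSTS TV)
    {r : ℕ} (hr : r = 1 ∨ r = 3) :
    ∃ N : ℕ, ∀ u : ℕ, N ≤ u → u % 6 = r →
      ∃ T : Finset (Finset (Fin u)), IsSTS T ∧ ∃ φ : α → Fin u, FullEmbedding TV T φ := by
  obtain ⟨k, m, f, φ, hE, rfl, hw⟩ := exists_isEnvelope_colour hV hr 127
  exact exists_bound_of_isEnvelope hE hV hw (by lia)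

/-- **Theorem 1.3.** If `V` is a partial Steiner triple system then there is an
integer `N'` such that, for `u ≥ N'` and `u ≡ 1` or `3 (mod 6)`, there is a Steiner
triple system `U` on `u` points having `V` as an `Aut U`-invariant subsystem on
which `Aut U` induces `Aut V`, with `Aut U ≅ Aut V` via restriction. -/
theorem stmt2 {α : Type*} [Fintype α] (TV : Finset (Finset α)) (hV : IsPSTS TV) :
    ∃ N : ℕ, ∀ u : ℕ, N ≤ u → u % 6 = 1 ∨ u % 6 = 3 →
      ∃ T : Finset (Finset (Fin u)), IsSTS T ∧
        ∃ φ : α → Fin u, FullEmbedding TV T φ := by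
  obtain ⟨N₁, h₁⟩ := exists_bound_of_mod_six hV (.inl rfl)
  obtain ⟨N₃, h₃⟩ := exists_bound_of_mod_six hV (.inr rfl)
  exact ⟨max N₁ N₃, fun u hu hmod =>
    hmod.elim (h₁ u ((le_max_left _ _).trans hu)) (h₃ u ((le_max_right _ _).trans hu))⟩

end
end

section
/- In Moore's construction, U := X ∪ (V × A) with the triples (M1), (M2), (M3) is a Steiner triple system: every pair of distinct elements of U lies in exactly one of the listed triples. -/
open Finset

noncomputable section
open scoped Classical

/-!
For each point `v` of `V`, the set `Y_v = X ∪ ({v} × A)` carries a copy of `Y`, and two of these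
copies share exactly `X`. Since `X` is a subsystem of `Y`, every triple of `U` with two points in
some `Y_v` is the copy of a triple of `Y`, so pairs inside a `Y_v` are covered exactly once because
`Y` is a Steiner triple system. The other pairs are `(v, a)`, `(w, b)` with `v ≠ w`. They can only
lie in a triple of type (M3), which, `A` being commutative, is the graph of a function with product
`1` on a triple of `V`; that triple has to be the one through `v` and `w`, and the third value of
the function has to be `(a * b)⁻¹`.
-/

theorem exists_eq_triple_of_card_eq_three {β : Type*} [DecidableEq β] {t : Finset β}
    (ht : t.card = 3) {p q : β} (hp : p ∈ t) (hq : q ∈ t) (hpq : p ≠ q) :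
    ∃ r, p ≠ r ∧ q ≠ r ∧ t = {p, q, r} := by
  have hpair : ({p, q} : Finset β) ⊆ t := by simp [insert_subset_iff, hp, hq]
  obtain ⟨r, hr⟩ : ∃ r, t \ {p, q} = {r} := by
    rw [← card_eq_one, card_sdiff_of_subset hpair, ht, card_pair hpq]
  grind

theorem exists_apply_eq_triple {α β : Type*} {u v w : α} (huv : u ≠ v) (huw : u ≠ w)
    (hvw : v ≠ w) (a b c : β) : ∃ f : α → β, f u = a ∧ f v = b ∧ f w = c :=
  ⟨fun x => if x = u then a else if x = v then b else c, by
    simp [huv.symm, huw.symm, hvw.symm]⟩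

theorem prod_triple {α A : Type*} [DecidableEq α] [CommMonoid A] {u v w : α} (huv : u ≠ v)
    (huw : u ≠ w) (hvw : v ≠ w) (f : α → A) :
    ∏ x ∈ ({u, v, w} : Finset α), f x = f u * f v * f w := by
  rw [prod_insert (by simp [huv, huw]), prod_pair hvw, mul_assoc]

theorem exists_equiv_sum_of_range_eq_compl {δ A γ : Type*} {j : δ → γ} {ℓ : A → γ}
    (hj : Function.Injective j) (hℓ : Function.Injective ℓ)
    (hrange : Set.range ℓ = (Set.range j)ᶜ) :
    ∃ e : δ ⊕ A ≃ γ, e ∘ Sum.inl = j ∧ e ∘ Sum.inr = ℓ := by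
  have hne : ∀ x a, j x ≠ ℓ a := fun x a h =>
    hrange.subset (Set.mem_range_self a) ⟨x, h⟩
  have hsurj : Function.Surjective (Sum.elim j ℓ) := by
    rw [← Set.range_eq_univ, Set.Sum.elim_range, hrange, Set.union_compl_self]
  exact ⟨Equiv.ofBijective _ ⟨hj.sumElim hℓ hne, hsurj⟩, rfl, rfl⟩

/-- `φ` identifies the triple system `S` with a subsystem of `T`. For systems of 3-element triples
this is `IsCopy` together with `IsSub`, but phrased without finiteness of the point set: a triple
of `T` through two points of the image is the image of a triple of `S`. -/
structure IsSubsystemEmbedding {α β : Type*} [DecidableEq β] (S : Finset (Finset α))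
    (T : Finset (Finset β)) (φ : α → β) : Prop where
  injective : Function.Injective φ
  image_mem : ∀ s ∈ S, s.image φ ∈ T
  exists_image_eq : ∀ t ∈ T, ∀ p q, p ≠ q → φ p ∈ t → φ q ∈ t → ∃ s ∈ S, s.image φ = t

theorem IsCopy.isSubsystemEmbedding {α β : Type*} [Fintype α] {S : Finset (Finset α)}
    {T : Finset (Finset β)} {φ : α → β} (hφ : IsCopy S T φ) (hsub : IsSub T (univ.image φ)) :
    IsSubsystemEmbedding S T φ where
  injective := hφ.1
  image_mem := hφ.2.1
  exists_image_eq t ht p q hpq hp hq := by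
    have hcard : 2 ≤ (t ∩ univ.image φ).card :=
      one_lt_card.2 ⟨φ p, by simp [hp], φ q, by simp [hq], hφ.1.ne hpq⟩
    obtain ⟨s, hs, rfl⟩ := hφ.2.2 t ht (hsub t ht hcard)
    exact ⟨s, hs, rfl⟩

namespace IsSubsystemEmbedding

variable {α β : Type*} [DecidableEq β] {S : Finset (Finset α)} {T : Finset (Finset β)}
  {φ : α → β}

theorem existsUnique_triple (hφ : IsSubsystemEmbedding S T φ) (hS : IsSTS S) {p q : α}
    (hpq : p ≠ q) : ∃! t, t ∈ T ∧ φ p ∈ t ∧ φ q ∈ t := by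
  obtain ⟨s, ⟨hs, hp, hq⟩, huniq⟩ := hS.2 p q hpq
  refine ⟨s.image φ, ⟨hφ.image_mem s hs, mem_image_of_mem φ hp, mem_image_of_mem φ hq⟩, ?_⟩
  rintro t ⟨ht, hpt, hqt⟩
  obtain ⟨s', hs', rfl⟩ := hφ.exists_image_eq t ht p q hpq hpt hqt
  rw [hφ.injective.mem_finset_image] at hpt hqt
  rw [huniq s' ⟨hs', hpt, hqt⟩]

theorem isSTS (hφ : IsSubsystemEmbedding S T φ) (hT : IsSTS T) : IsSTS S := by
  refine ⟨fun s hs => ?_, fun p q hpq => ?_⟩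
  · rw [← card_image_of_injective s hφ.injective, hT.1 _ (hφ.image_mem s hs)]
  · obtain ⟨t, ⟨ht, hp, hq⟩, huniq⟩ := hT.2 _ _ (hφ.injective.ne hpq)
    obtain ⟨s, hs, rfl⟩ := hφ.exists_image_eq t ht p q hpq hp hq
    rw [hφ.injective.mem_finset_image] at hp hq
    refine ⟨s, ⟨hs, hp, hq⟩, fun s' ⟨hs', hp', hq'⟩ => image_injective hφ.injective ?_⟩
    exact huniq _ ⟨hφ.image_mem s' hs', mem_image_of_mem φ hp', mem_image_of_mem φ hq'⟩

theorem exists_image_eq_or_eq_triple (hφ : IsSubsystemEmbedding S T φ) {t : Finset β}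
    (ht : t ∈ T) (hcard : t.card = 3) :
    (∃ s ∈ S, s.image φ = t) ∨
      ∃ a b c, a ∉ Set.range φ ∧ b ∉ Set.range φ ∧ t = {a, b, c} := by
  by_cases hin : ∃ p q, p ≠ q ∧ φ p ∈ t ∧ φ q ∈ t
  · obtain ⟨p, q, hpq, hp, hq⟩ := hin
    exact Or.inl (hφ.exists_image_eq t ht p q hpq hp hq)
  · have hle : #{x ∈ t | x ∈ Set.range φ} ≤ 1 := by
      simp only [card_le_one, mem_filter]
      rintro _ ⟨hp, p, rfl⟩ _ ⟨hq, q, rfl⟩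
      by_contra hne
      exact hin ⟨p, q, ne_of_apply_ne φ hne, hp, hq⟩
    have hlt : 1 < #{x ∈ t | x ∉ Set.range φ} := by
      have := card_filter_add_card_filter_not (s := t) (· ∈ Set.range φ)
      omega
    obtain ⟨a, ha, b, hb, hab⟩ := one_lt_card.1 hlt
    rw [mem_filter] at ha hb
    obtain ⟨c, -, -, rfl⟩ := exists_eq_triple_of_card_eq_three hcard ha.1 hb.1 hab
    exact Or.inr ⟨a, b, c, ha.2, hb.2, rfl⟩

end IsSubsystemEmbedding

section Moore

variable {δ α γ A : Type*}

/-- The embedding of `Y` into `U = X ∪ (V × A)` whose image is the subsystem `Y_v` (`MooreY v`).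
The labeling of `Y - X` by `A` and the inclusion of `X` are combined in `e : δ ⊕ A ≃ γ`. -/
def mooreFiber (e : δ ⊕ A ≃ γ) (v : α) : γ → δ ⊕ α × A :=
  Sum.map id (Prod.mk v) ∘ e.symm

variable {e : δ ⊕ A ≃ γ}

theorem mooreFiber_inl (v : α) (x : δ) : mooreFiber e v (e (Sum.inl x)) = Sum.inl x := by
  simp [mooreFiber]

theorem mooreFiber_inr (v : α) (a : A) : mooreFiber e v (e (Sum.inr a)) = Sum.inr (v, a) := by
  simp [mooreFiber]

theorem mooreFiber_injective (v : α) : Function.Injective (mooreFiber e v) :=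
  (Function.injective_id.sumMap (Prod.mk_right_injective v)).comp e.symm.injective

theorem mooreFiber_eq_inl_iff {v : α} {y : γ} {x : δ} :
    mooreFiber e v y = Sum.inl x ↔ y = e (Sum.inl x) := by
  rw [← mooreFiber_inl v, (mooreFiber_injective v).eq_iff]

theorem mooreFiber_eq_inr_iff {v w : α} {y : γ} {a : A} :
    mooreFiber e v y = Sum.inr (w, a) ↔ v = w ∧ y = e (Sum.inr a) := by
  obtain ⟨x | b, rfl⟩ := e.surjective y <;> simp [mooreFiber]

theorem exists_eq_inl_of_mooreFiber_eq {v w : α} (hvw : v ≠ w) {y z : γ}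
    (h : mooreFiber e v y = mooreFiber e w z) :
    ∃ x, y = e (Sum.inl x) ∧ z = e (Sum.inl x) := by
  obtain ⟨x | a, rfl⟩ := e.surjective z
  · rw [mooreFiber_inl, mooreFiber_eq_inl_iff] at h
    exact ⟨x, h, rfl⟩
  · rw [mooreFiber_inr, mooreFiber_eq_inr_iff] at h
    exact absurd h.1 hvw

theorem image_mooreFiber_image_inl (v : α) (s : Finset δ) :
    (s.image (e ∘ Sum.inl)).image (mooreFiber e v) = s.image Sum.inl := by
  rw [image_image]
  exact image_congr fun x _ => mooreFiber_inl v x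

variable [Fintype δ] [Fintype α] [Fintype A]
  {TX : Finset (Finset δ)} {TV : Finset (Finset α)} {TY : Finset (Finset γ)}

theorem image_mooreFiber_mem_mooreTriples [Group A]
    (hX : IsSubsystemEmbedding TX TY (e ∘ Sum.inl)) (v : α) {s : Finset γ}
    (hs : s ∈ TY) (hcard : s.card = 3) :
    s.image (mooreFiber e v) ∈ MooreTriples TX TV TY (e ∘ Sum.inl) (e ∘ Sum.inr) := by
  simp only [MooreTriples, mem_filter_univ]
  rcases hX.exists_image_eq_or_eq_triple hs hcard with
    ⟨s, hsX, rfl⟩ | ⟨p, q, r, hp, hq, rfl⟩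
  · exact Or.inl ⟨s, hsX, image_mooreFiber_image_inl v s⟩
  obtain ⟨x | a, rfl⟩ := e.surjective p
  · exact absurd ⟨x, rfl⟩ hp
  obtain ⟨x | b, rfl⟩ := e.surjective q
  · exact absurd ⟨x, rfl⟩ hq
  obtain ⟨x | c, rfl⟩ := e.surjective r
  · exact Or.inr (Or.inl ⟨v, a, b, x, hs, by
      simp only [image_insert, image_singleton, mooreFiber_inl, mooreFiber_inr]⟩)
  · exact Or.inr (Or.inr (Or.inl ⟨v, a, b, c, hs, by
      simp only [image_insert, image_singleton, mooreFiber_inr]⟩))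

variable [CommGroup A]

theorem mem_mooreTriples_iff (hX : IsSubsystemEmbedding TX TY (e ∘ Sum.inl))
    (hY : ∀ s ∈ TY, s.card = 3) (hV : ∀ s ∈ TV, s.card = 3) {t : Finset (δ ⊕ α × A)} :
    t ∈ MooreTriples TX TV TY (e ∘ Sum.inl) (e ∘ Sum.inr) ↔
      (∃ s ∈ TX, t = s.image Sum.inl) ∨
      (∃ v, ∃ s ∈ TY, t = s.image (mooreFiber e v)) ∨
      ∃ s ∈ TV, ∃ f : α → A, ∏ u ∈ s, f u = 1 ∧ t = s.image fun u => Sum.inr (u, f u) := by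
  constructor
  · intro ht
    simp only [MooreTriples, mem_filter_univ] at ht
    rcases ht with hM1 | ⟨v, a, b, x, hs, rfl⟩ | ⟨v, a, b, c, hs, rfl⟩ |
      ⟨u, v, w, a, b, c, hs, habc, rfl⟩
    · exact Or.inl hM1
    · refine Or.inr (Or.inl ⟨v, _, hs, ?_⟩)
      simp only [Function.comp_apply, image_insert, image_singleton, mooreFiber_inl,
        mooreFiber_inr]
    · refine Or.inr (Or.inl ⟨v, _, hs, ?_⟩)
      simp only [Function.comp_apply, image_insert, image_singleton, mooreFiber_inr]
    · obtain ⟨huv, huw, hvw⟩ := card_triple_eq_three_iff.1 (hV _ hs)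
      obtain ⟨f, rfl, rfl, rfl⟩ := exists_apply_eq_triple huv huw hvw a b c
      refine Or.inr (Or.inr ⟨_, hs, f, (prod_triple huv huw hvw f).trans habc, ?_⟩)
      simp only [image_insert, image_singleton]
  · rintro (hM1 | ⟨v, s, hs, rfl⟩ | ⟨s, hs, f, hf, rfl⟩)
    · exact (mem_filter_univ _).2 (Or.inl hM1)
    · exact image_mooreFiber_mem_mooreTriples hX v hs (hY s hs)
    · obtain ⟨u, v, w, huv, huw, hvw, rfl⟩ := card_eq_three.1 (hV s hs)
      rw [prod_triple huv huw hvw] at hf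
      exact (mem_filter_univ _).2 <| Or.inr <| Or.inr <| Or.inr
        ⟨u, v, w, f u, f v, f w, hs, hf, by simp only [image_insert, image_singleton]⟩

theorem card_eq_three_of_mem_mooreTriples (hX : IsSubsystemEmbedding TX TY (e ∘ Sum.inl))
    (hY : ∀ s ∈ TY, s.card = 3) (hV : ∀ s ∈ TV, s.card = 3) {t : Finset (δ ⊕ α × A)}
    (ht : t ∈ MooreTriples TX TV TY (e ∘ Sum.inl) (e ∘ Sum.inr)) : t.card = 3 := by
  rcases (mem_mooreTriples_iff hX hY hV).1 ht with
    ⟨s, hs, rfl⟩ | ⟨v, s, hs, rfl⟩ | ⟨s, hs, f, -, rfl⟩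
  · rw [card_image_of_injective s Sum.inl_injective, ← card_image_of_injective s hX.injective]
    exact hY _ (hX.image_mem s hs)
  · rw [card_image_of_injective s (mooreFiber_injective v), hY s hs]
  · have hinj : Function.Injective fun u => (Sum.inr (u, f u) : δ ⊕ α × A) :=
      fun u v h => (Prod.mk.inj (Sum.inr_injective h)).1
    rw [card_image_of_injective s hinj, hV s hs]

theorem isSubsystemEmbedding_inl_mooreTriples
    (hX : IsSubsystemEmbedding TX TY (e ∘ Sum.inl)) (hY : ∀ s ∈ TY, s.card = 3)
    (hV : ∀ s ∈ TV, s.card = 3) :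
    IsSubsystemEmbedding TX (MooreTriples TX TV TY (e ∘ Sum.inl) (e ∘ Sum.inr)) Sum.inl where
  injective := Sum.inl_injective
  image_mem s hs := (mem_mooreTriples_iff hX hY hV).2 (Or.inl ⟨s, hs, rfl⟩)
  exists_image_eq t ht x y hxy hx hy := by
    rcases (mem_mooreTriples_iff hX hY hV).1 ht with
      ⟨s, hs, rfl⟩ | ⟨v, s, hs, rfl⟩ | ⟨s, -, f, -, rfl⟩
    · exact ⟨s, hs, rfl⟩
    · simp only [mem_image, mooreFiber_eq_inl_iff, exists_eq_right] at hx hy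
      obtain ⟨s, hsX, rfl⟩ := hX.exists_image_eq s hs x y hxy hx hy
      exact ⟨s, hsX, (image_mooreFiber_image_inl v s).symm⟩
    · simp at hx

theorem isSubsystemEmbedding_mooreFiber
    (hX : IsSubsystemEmbedding TX TY (e ∘ Sum.inl)) (hY : ∀ s ∈ TY, s.card = 3)
    (hV : ∀ s ∈ TV, s.card = 3) (v : α) :
    IsSubsystemEmbedding TY (MooreTriples TX TV TY (e ∘ Sum.inl) (e ∘ Sum.inr))
      (mooreFiber e v) where
  injective := mooreFiber_injective v
  image_mem s hs := (mem_mooreTriples_iff hX hY hV).2 (Or.inr (Or.inl ⟨v, s, hs, rfl⟩))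
  exists_image_eq t ht p q hpq hp hq := by
    rcases (mem_mooreTriples_iff hX hY hV).1 ht with
      ⟨s, hs, rfl⟩ | ⟨w, s, hs, rfl⟩ | ⟨s, -, f, -, rfl⟩
    · exact ⟨_, hX.image_mem s hs, image_mooreFiber_image_inl v s⟩
    · obtain rfl | hvw := eq_or_ne v w
      · exact ⟨s, hs, rfl⟩
      obtain ⟨p', hp', hpp'⟩ := mem_image.1 hp
      obtain ⟨q', hq', hqq'⟩ := mem_image.1 hq
      obtain ⟨x, rfl, rfl⟩ := exists_eq_inl_of_mooreFiber_eq hvw hpp'.symm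
      obtain ⟨y, rfl, rfl⟩ := exists_eq_inl_of_mooreFiber_eq hvw hqq'.symm
      obtain ⟨s, -, rfl⟩ := hX.exists_image_eq s hs x y (ne_of_apply_ne (e ∘ Sum.inl) hpq) hp' hq'
      exact ⟨_, hs, by rw [image_mooreFiber_image_inl, image_mooreFiber_image_inl]⟩
    · obtain ⟨u, -, hu⟩ := mem_image.1 hp
      obtain ⟨u', -, hu'⟩ := mem_image.1 hq
      obtain ⟨rfl, rfl⟩ := mooreFiber_eq_inr_iff.1 hu.symm
      obtain ⟨rfl, rfl⟩ := mooreFiber_eq_inr_iff.1 hu'.symm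
      exact absurd rfl hpq

theorem exists_transversal_of_mem_mooreTriples
    (hX : IsSubsystemEmbedding TX TY (e ∘ Sum.inl)) (hY : ∀ s ∈ TY, s.card = 3)
    (hV : ∀ s ∈ TV, s.card = 3) {t : Finset (δ ⊕ α × A)}
    (ht : t ∈ MooreTriples TX TV TY (e ∘ Sum.inl) (e ∘ Sum.inr)) {v w : α} (hvw : v ≠ w)
    {a b : A} (hv : Sum.inr (v, a) ∈ t) (hw : Sum.inr (w, b) ∈ t) :
    ∃ s ∈ TV, ∃ f : α → A, v ∈ s ∧ w ∈ s ∧ f v = a ∧ f w = b ∧ ∏ u ∈ s, f u = 1 ∧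
      t = s.image fun u => Sum.inr (u, f u) := by
  rcases (mem_mooreTriples_iff hX hY hV).1 ht with
    ⟨s, -, rfl⟩ | ⟨u, s, -, rfl⟩ | ⟨s, hs, f, hf, rfl⟩
  · simp at hv
  · simp only [mem_image, mooreFiber_eq_inr_iff] at hv hw
    obtain ⟨-, -, rfl, -⟩ := hv
    obtain ⟨-, -, rfl, -⟩ := hw
    exact absurd rfl hvw
  · simp only [mem_image, Sum.inr.injEq, Prod.mk.injEq, existsAndEq, true_and] at hv hw
    exact ⟨s, hs, f, hv.1, hw.1, hv.2, hw.2, hf, rfl⟩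

theorem existsUnique_mooreTriple_inr_inr (hX : IsSubsystemEmbedding TX TY (e ∘ Sum.inl))
    (hY : ∀ s ∈ TY, s.card = 3) (hV : IsSTS TV) {v w : α} (hvw : v ≠ w) (a b : A) :
    ∃! t, t ∈ MooreTriples TX TV TY (e ∘ Sum.inl) (e ∘ Sum.inr) ∧
      Sum.inr (v, a) ∈ t ∧ Sum.inr (w, b) ∈ t := by
  obtain ⟨s, ⟨hs, hv, hw⟩, huniq⟩ := hV.2 v w hvw
  obtain ⟨u, hvu, hwu, rfl⟩ := exists_eq_triple_of_card_eq_three (hV.1 s hs) hv hw hvw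
  obtain ⟨f, rfl, rfl, hfu⟩ := exists_apply_eq_triple hvw hvu hwu a b (a * b)⁻¹
  have hf : ∏ x ∈ {v, w, u}, f x = 1 := by
    rw [prod_triple hvw hvu hwu, hfu, mul_inv_cancel]
  refine ⟨({v, w, u} : Finset α).image fun x => Sum.inr (x, f x),
    ⟨(mem_mooreTriples_iff hX hY hV.1).2 (Or.inr (Or.inr ⟨_, hs, f, hf, rfl⟩)),
      mem_image_of_mem _ hv, mem_image_of_mem _ hw⟩, ?_⟩
  rintro t ⟨ht, hvt, hwt⟩
  obtain ⟨s, hs', g, hvs, hws, hgv, hgw, hg, rfl⟩ :=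
    exists_transversal_of_mem_mooreTriples hX hY hV.1 ht hvw hvt hwt
  obtain rfl := huniq s ⟨hs', hvs, hws⟩
  have hgu : g u = f u := by
    rw [prod_triple hvw hvu hwu, hgv, hgw] at hg
    rw [hfu, eq_inv_of_mul_eq_one_right hg]
  simp only [image_insert, image_singleton, hgv, hgw, hgu]

end Moore

theorem stmt3_general {δ α γ A : Type*} [Fintype δ] [Fintype α] [Fintype A] [CommGroup A]
    (TX : Finset (Finset δ)) (TV : Finset (Finset α)) (TY : Finset (Finset γ))
    (j : δ → γ) (ℓ : A → γ) (hY : IsSTS TY) (hV : IsSTS TV) (hX : IsCopy TX TY j)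
    (hsub : IsSub TY (univ.image j)) (hℓ : Function.Injective ℓ)
    (hrange : Set.range ℓ = (Set.range j)ᶜ) :
    IsSTS (MooreTriples TX TV TY j ℓ) := by
  have hemb := hX.isSubsystemEmbedding hsub
  obtain ⟨e, rfl, rfl⟩ := exists_equiv_sum_of_range_eq_compl hX.1 hℓ hrange
  refine ⟨fun t ht => card_eq_three_of_mem_mooreTriples hemb hY.1 hV.1 ht, ?_⟩
  have existsUnique_of_fiber (v : α) {p q : γ} (hpq : mooreFiber e v p ≠ mooreFiber e v q) :
      ∃! t, t ∈ MooreTriples TX TV TY (e ∘ Sum.inl) (e ∘ Sum.inr) ∧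
        mooreFiber e v p ∈ t ∧ mooreFiber e v q ∈ t :=
    (isSubsystemEmbedding_mooreFiber hemb hY.1 hV.1 v).existsUnique_triple hY
      (ne_of_apply_ne _ hpq)
  rintro (x | ⟨v, a⟩) (y | ⟨w, b⟩) hne
  -- `V` may be empty, so pairs in `X` are covered through `X` and not through some `Y_v`.
  · exact (isSubsystemEmbedding_inl_mooreTriples hemb hY.1 hV.1).existsUnique_triple
      (hemb.isSTS hY) (ne_of_apply_ne _ hne)
  · rw [← mooreFiber_inl (e := e) w, ← mooreFiber_inr (e := e)] at hne ⊢
    exact existsUnique_of_fiber w hne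
  · rw [← mooreFiber_inl (e := e) v, ← mooreFiber_inr (e := e)] at hne ⊢
    exact existsUnique_of_fiber v hne
  · obtain rfl | hvw := eq_or_ne v w
    · rw [← mooreFiber_inr (e := e), ← mooreFiber_inr (e := e)] at hne ⊢
      exact existsUnique_of_fiber v hne
    · exact existsUnique_mooreTriple_inr_inr hemb hY.1 hV hvw a b

/-- **Moore's construction** `U := X ∪ (V × A)` with the triples (M1), (M2), (M3)
is a Steiner triple system. -/
theorem stmt3 {δ α γ A : Type*} [Fintype δ] [Fintype α] [Fintype γ] [Fintype A]
    [Group A] (TX : Finset (Finset δ)) (TV : Finset (Finset α))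
    (TY : Finset (Finset γ)) (j : δ → γ) (ℓ : A → γ)
    (hM : MooreSetup TX TV TY j ℓ) :
    IsSTS (MooreTriples TX TV TY j ℓ) := by
  obtain ⟨hY, hV, hA, -, hsub, hX, hℓ, hrange⟩ := hM
  let _ : CommGroup A := IsCyclic.commGroup
  exact stmt3_general TX TV TY j ℓ hY hV hX hsub hℓ hrange

end
end
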